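/- arXiv:1802.04214 — 2 statements merged into one kernel-verified Lean document; each statement's English description precedes it below -/
import Mathlib

section
/- Up to projective equivalence there are exactly five complete caps of size 17 in PG(5,2): the number of orbits of the action of GL(6, ZMod 2) on the collection of complete caps of 17 nonzero vectors of (ZMod 2)^6 is exactly 5. (This proves the conjecture of Davydov and Tombak.) -/
/-- Points of PG(n-1,2) are the nonzero vectors of `Fin n → ZMod 2`.
A set `S` of nonzero vectors is 1-saturating if every nonzero vector `x ∉ S`
is the sum of two distinct elements of `S`. -/
def Saturating {n : ℕ} (S : Set (Fin n → ZMod 2)) : Prop :=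
  (∀ s ∈ S, s ≠ 0) ∧
    ∀ x : Fin n → ZMod 2, x ≠ 0 → x ∉ S →
      ∃ a ∈ S, ∃ b ∈ S, a ≠ b ∧ x = a + b

/-- A minimal 1-saturating set: 1-saturating, and removing any point destroys saturation. -/
def MinSat {n : ℕ} (S : Set (Fin n → ZMod 2)) : Prop :=
  Saturating S ∧ ∀ s ∈ S, ¬ Saturating (S \ {s})

/-- A cap: a set of nonzero vectors no three pairwise distinct elements of which sum to zero. -/
def IsCap {n : ℕ} (S : Set (Fin n → ZMod 2)) : Prop :=
  (∀ s ∈ S, s ≠ 0) ∧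
    ∀ a ∈ S, ∀ b ∈ S, ∀ c ∈ S, a ≠ b → a ≠ c → b ≠ c → a + b + c ≠ 0

/-- A complete cap: a cap that is 1-saturating. -/
def CompleteCap {n : ℕ} (S : Set (Fin n → ZMod 2)) : Prop :=
  IsCap S ∧ Saturating S

/-- Projective equivalence: some element of GL(n, ZMod 2) maps `S` onto `T`. -/
def ProjEquiv {n : ℕ} (S T : Set (Fin n → ZMod 2)) : Prop :=
  ∃ g : Matrix.GeneralLinearGroup (Fin n) (ZMod 2),
    (fun x => Matrix.mulVec (g : Matrix (Fin n) (Fin n) (ZMod 2)) x) '' S = T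

/-!
Let `S` be a complete cap of size 17 in `V = 𝔽₂⁶`, so that `S + S = Sᶜ`. Any three points of `S` are
linearly independent, so counting triples, pairs and single points of `S` on the hyperplanes
determines the sum of `(k - 5)(k - 9)(k - 10)` over all section sizes `k`; it is so small that some
section has at most four points. Such a section `B` is independent and has 1, 3 or 4 points, since
otherwise `S` would be invariant under a translation, although `S` has odd size. On every coset of
`span B` outside the hyperplane, `S` induces a maximal independent set of the hypercube with edge
directions `B`, and comparing the colour classes of these sets yields a smaller section unless `B`
is a single point.

Hence, in suitable coordinates, `S` is the graph of a Boolean function `f` on `𝔽₂⁴` together with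
its point at infinity, and completeness says that no derivative `f (x + u) + f x` with `u ≠ 0` is
constant. If `f` has even weight, its derivative in the direction `∑ x, f x • x`, or in every
direction if this sum vanishes, is affine, which brings `f` into the form
`x₀x₁ + c x₀x₂x₃ + γ x₂x₃` up to affine functions and substitutions. If `f` has odd weight, it
differs from an affine or such a quadratic function by the indicator of a point. The five resulting
caps are told apart by the sizes 10, 12, 15, 13, 11 of their largest sections.
-/

open Finset Module
open scoped Pointwise

local notation "𝔽₂" => ZMod 2

theorem zmod_two_ne_zero_iff {a : 𝔽₂} : a ≠ 0 ↔ a = 1 := by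
  revert a
  decide

theorem zmod_two_eq_zero_or_one (a : 𝔽₂) : a = 0 ∨ a = 1 := by
  revert a
  decide

theorem zmod_two_forall {P : 𝔽₂ → Prop} : (∀ a, P a) ↔ P 0 ∧ P 1 := Fin.forall_fin_two

section SumFree

variable {V V' : Type*} [AddCommGroup V] [AddCommGroup V'] {S : Set V}

/-- A complete cap in the language of sumsets: `S + S ⊆ Sᶜ` says that `S` is a cap and
`Sᶜ ⊆ S + S` that it is 1-saturating, the sums `a + a = 0` accounting for the point `0`. -/
def CompleteSumFree (S : Set V) : Prop := S + S = Sᶜ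

namespace CompleteSumFree

theorem disjoint_add (hS : CompleteSumFree S) : Disjoint (S + S) S :=
  hS ▸ disjoint_compl_left

theorem add_notMem (hS : CompleteSumFree S) {a b : V} (ha : a ∈ S) (hb : b ∈ S) : a + b ∉ S :=
  hS.subset (Set.add_mem_add ha hb)

theorem exists_add_eq (hS : CompleteSumFree S) {x : V} (hx : x ∉ S) :
    ∃ a ∈ S, ∃ b ∈ S, a + b = x :=
  Set.mem_add.1 (hS.superset hx)

theorem zero_notMem (hS : CompleteSumFree S) : (0 : V) ∉ S := fun h =>
  hS.add_notMem h h (by rwa [add_zero])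

theorem image (hS : CompleteSumFree S) (e : V ≃+ V') : CompleteSumFree (e '' S) := by
  rw [CompleteSumFree, ← Set.image_add, hS, Set.image_compl_eq e.bijective]

end CompleteSumFree

theorem completeCap_iff_completeSumFree {n : ℕ} {S : Set (Fin n → 𝔽₂)} (hS : S.Nonempty) :
    CompleteCap S ↔ CompleteSumFree S := by
  have add_self : ∀ x : Fin n → 𝔽₂, x + x = 0 := ZModModule.add_self
  constructor
  · refine fun ⟨hcap, hsat⟩ => Set.Subset.antisymm ?_ fun x hx => ?_
    · rintro _ ⟨a, ha, b, hb, rfl⟩ hab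
      have hne := hcap.1
      refine hcap.2 a ha b hb _ hab ?_ ?_ ?_ (add_self _) <;> grind
    · by_cases hx0 : x = 0
      · obtain ⟨s, hs⟩ := hS
        exact ⟨s, hs, s, hs, (add_self s).trans hx0.symm⟩
      · obtain ⟨a, ha, b, hb, -, rfl⟩ := hsat.2 x hx0 hx
        exact Set.add_mem_add ha hb
  · intro h
    have hne : ∀ s ∈ S, s ≠ 0 := fun s hs hs0 => h.zero_notMem (hs0 ▸ hs)
    refine ⟨⟨hne, fun a ha b hb c hc _ _ _ habc => h.add_notMem ha hb ?_⟩, hne, fun x hx0 hx => ?_⟩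
    · rwa [add_eq_zero_iff_eq_neg.1 habc, ZModModule.neg_eq_self]
    · obtain ⟨a, ha, b, hb, rfl⟩ := h.exists_add_eq hx
      exact ⟨a, ha, b, hb, fun hab => hx0 (hab ▸ add_self a), rfl⟩

theorem projEquiv_iff_exists_linearEquiv {n : ℕ} {S T : Set (Fin n → 𝔽₂)} :
    ProjEquiv S T ↔ ∃ e : (Fin n → 𝔽₂) ≃ₗ[𝔽₂] (Fin n → 𝔽₂), e '' S = T :=
  (Matrix.GeneralLinearGroup.toLin.trans
    (LinearMap.GeneralLinearGroup.generalLinearEquiv 𝔽₂ (Fin n → 𝔽₂))).toEquiv.exists_congr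
      fun _ => Iff.rfl

variable [Module 𝔽₂ V]

theorem linearIndepOn_id_of_sum_ne_zero {A : Finset V}
    (hA : ∀ B ⊆ A, B.Nonempty → ∑ x ∈ B, x ≠ 0) : LinearIndepOn 𝔽₂ id (A : Set V) := by
  rw [linearIndepOn_finset_iff]
  intro c hc x hx
  by_contra hcx
  refine hA {y ∈ A | c y ≠ 0} (filter_subset _ _) ⟨x, mem_filter.2 ⟨hx, hcx⟩⟩ ?_
  rw [← hc, sum_filter]
  refine sum_congr rfl fun y _ => ?_
  by_cases h : c y = 0
  · simp [h]
  · simp [zmod_two_ne_zero_iff.1 h]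

theorem linearIndepOn_of_disjoint_add {A : Finset V} (hA : Disjoint (A + A : Set V) A)
    (hcard : #A ≤ 4) (hsum : #A = 4 → ∑ x ∈ A, x ≠ 0) : LinearIndepOn 𝔽₂ id (A : Set V) := by
  have add_notMem : ∀ x ∈ A, ∀ y ∈ A, x + y ∉ A := fun x hx y hy =>
    Set.disjoint_left.1 hA (Set.add_mem_add hx hy)
  refine linearIndepOn_id_of_sum_ne_zero fun B hBA hB hB0 => ?_
  have hBcard : #B ≤ 4 := (card_le_card hBA).trans hcard
  have := hB.card_pos
  classical
  interval_cases h : #B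
  · obtain ⟨a, rfl⟩ := card_eq_one.1 h
    grind [sum_singleton]
  · obtain ⟨a, b, hab, rfl⟩ := card_eq_two.1 h
    rw [sum_pair hab, ← ZModModule.sub_eq_add, sub_eq_zero] at hB0
    exact hab hB0
  · obtain ⟨a, b, c, hab, hac, hbc, rfl⟩ := card_eq_three.1 h
    rw [sum_insert (by simp [hab, hac]), sum_pair hbc, add_eq_zero_iff_eq_neg,
      ZModModule.neg_eq_self] at hB0
    exact add_notMem b (by grind) c (by grind) (hB0 ▸ hBA (by simp))
  · have hBA' : B = A := eq_of_subset_of_card_le hBA (by omega)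
    exact hsum (hBA' ▸ h) (hBA' ▸ hB0)

end SumFree

section StandardEquations

variable {K V : Type*} [Field K] [DecidableEq K] [AddCommGroup V] [Module K V]
  [FiniteDimensional K V] [Fintype (Dual K V)]

theorem card_dual_eq_zero_on {A : Finset V} (hA : LinearIndepOn K id (A : Set V)) :
    #{φ : Dual K V | ∀ x ∈ A, φ x = 0} = Nat.card K ^ (finrank K V - #A) := by
  let W := Submodule.span K (A : Set V)
  have hW : finrank K W = #A := finrank_span_finset_eq_card hA
  have hW' : finrank K W.dualAnnihilator = finrank K V - #A := by
    have := Subspace.finrank_add_finrank_dualAnnihilator_eq W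
    omega
  rw [← hW', ← natCard_eq_pow_finrank (K := K) (V := W.dualAnnihilator)]
  refine (Nat.subtype_card _ fun φ => ?_).symm
  rw [mem_filter_univ, ← SetLike.mem_coe, Submodule.coe_dualAnnihilator_span]
  rfl

theorem sum_choose_card_section {S : Finset V} {j : ℕ}
    (hS : ∀ A ⊆ S, #A = j → LinearIndepOn K id (A : Set V)) :
    ∑ φ : Dual K V, (#{x ∈ S | φ x = 0}).choose j =
      (#S).choose j * Nat.card K ^ (finrank K V - j) := by
  classical
  calc ∑ φ : Dual K V, (#{x ∈ S | φ x = 0}).choose j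
      = ∑ φ : Dual K V, #{A ∈ S.powersetCard j | ∀ x ∈ A, φ x = 0} := by
        refine sum_congr rfl fun φ _ => ?_
        rw [← card_powersetCard]
        congr 1
        ext A
        simp only [mem_powersetCard, mem_filter, subset_iff]
        grind
    _ = ∑ A ∈ S.powersetCard j, #{φ : Dual K V | ∀ x ∈ A, φ x = 0} := by
        simp only [card_filter]
        exact sum_comm
    _ = ∑ _A ∈ S.powersetCard j, Nat.card K ^ (finrank K V - j) := by
        refine sum_congr rfl fun A hA => ?_
        obtain ⟨hAS, hAj⟩ := mem_powersetCard.1 hA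
        rw [card_dual_eq_zero_on (hS A hAS hAj), hAj]
    _ = (#S).choose j * Nat.card K ^ (finrank K V - j) := by
        rw [sum_const, card_powersetCard, smul_eq_mul]

end StandardEquations

section SmallSection

variable {V : Type*} [AddCommGroup V] [Module 𝔽₂ V] {S : Finset V}

theorem exists_card_section_le_four [FiniteDimensional 𝔽₂ V] (hV : finrank 𝔽₂ V = 6)
    (hS : Disjoint (S + S : Set V) S) (hcard : #S = 17) :
    ∃ φ : Dual 𝔽₂ V, #{x ∈ S | φ x = 0} ≤ 4 := by
  classical
  by_contra! hlarge
  have : Finite (Dual 𝔽₂ V) := Module.finite_of_finite 𝔽₂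
  have := Fintype.ofFinite (Dual 𝔽₂ V)
  have standard (j : ℕ) (hj : j ≤ 3) :
      ∑ φ : Dual 𝔽₂ V, (#{x ∈ S | φ x = 0}).choose j = Nat.choose 17 j * 2 ^ (6 - j) := by
    rw [sum_choose_card_section fun A hAS hA => linearIndepOn_of_disjoint_add
      (hS.mono (Set.add_subset_add hAS hAS) hAS) (by omega) (by omega), hcard, hV, Nat.card_zmod]
  -- `6 * C(k,3) - 42 * C(k,2) + 162 * C(k,1) - 450 = (k - 5) * (k - 9) * (k - 10)`, which is `672`
  -- for `k = 17`, the section of `φ = 0`.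
  have cubic (φ : Dual 𝔽₂ V) :
      42 * (#{x ∈ S | φ x = 0}).choose 2 + 450 * (#{x ∈ S | φ x = 0}).choose 0
          + (if φ = 0 then 672 else 0) ≤
        6 * (#{x ∈ S | φ x = 0}).choose 3 + 162 * (#{x ∈ S | φ x = 0}).choose 1 := by
    split_ifs with hφ
    · simp [hφ, hcard, Nat.choose]
    · have hpoly : ∀ k ∈ Icc 5 17, 42 * k.choose 2 + 450 * k.choose 0 ≤
          6 * k.choose 3 + 162 * k.choose 1 := by decide
      exact hpoly _ (mem_Icc.2 ⟨hlarge φ, hcard ▸ card_filter_le _ _⟩)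
  have hsum := sum_le_sum fun φ (_ : φ ∈ univ) => cubic φ
  simp only [sum_add_distrib, ← mul_sum, sum_ite_eq', mem_univ, if_true] at hsum
  rw [standard 0 (by simp), standard 1 (by simp), standard 2 (by simp), standard 3 le_rfl] at hsum
  revert hsum
  decide

theorem CompleteSumFree.add_mem_of_section_add_mem {S : Set V} (hS : CompleteSumFree S)
    (φ : Dual 𝔽₂ V) {d : V} (hd : φ d = 0) (hdS : ∀ x ∈ S, φ x = 0 → x + d ∈ S) :
    ∀ x ∈ S, x + d ∈ S := by
  intro x hx
  by_contra hxd
  have hφx : φ x ≠ 0 := fun h => hxd (hdS x hx h)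
  obtain ⟨a, ha, b, hb, hab⟩ := hS.exists_add_eq hxd
  wlog hφa : φ a = 0 generalizing a b
  · have parity : ∀ s t u : 𝔽₂, s + t = u → u ≠ 0 → s ≠ 0 → t = 0 := by decide
    exact this b hb a ha (by rwa [add_comm])
      (parity _ _ _ (by simpa [hd] using congrArg φ hab) hφx hφa)
  have hb' : b = x + (a + d) := by
    have := ZModModule.add_self a
    grind
  exact hS.add_notMem hx (hdS a ha hφa) (hb' ▸ hb)

theorem even_card_of_add_mem {d : V} (hd : d ≠ 0) (h : ∀ x ∈ S, x + d ∈ S) : Even #S := by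
  rw [← ZMod.natCast_eq_zero_iff_even, card_eq_sum_ones, Nat.cast_sum]
  refine sum_involution (fun x _ => x + d) (fun _ _ => by decide) (fun x _ _ => by simpa) h
    fun x _ => ?_
  rw [add_assoc, ZModModule.add_self, add_zero]

theorem CompleteSumFree.exists_section_add_notMem (hS : CompleteSumFree (S : Set V)) (hodd : Odd #S)
    {φ : Dual 𝔽₂ V} {d : V} (hd : d ≠ 0) (hφd : φ d = 0) :
    ∃ x ∈ S, φ x = 0 ∧ x + d ∉ S := by
  by_contra! h
  exact Nat.not_even_iff_odd.2 hodd
    (even_card_of_add_mem hd (hS.add_mem_of_section_add_mem φ hφd h))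

theorem CompleteSumFree.exists_section_add_add_notMem (hS : CompleteSumFree (S : Set V))
    (hodd : Odd #S) {φ : Dual 𝔽₂ V} {a b : V} (hab : a ≠ b) (ha : φ a = 0) (hb : φ b = 0) :
    ∃ x ∈ S, φ x = 0 ∧ x + (a + b) ∉ S :=
  hS.exists_section_add_notMem hodd (by rwa [← ZModModule.sub_eq_add, sub_ne_zero])
    (by simp [ha, hb])

theorem CompleteSumFree.card_section_ne_two (hS : CompleteSumFree (S : Set V)) (hodd : Odd #S)
    (φ : Dual 𝔽₂ V) : #{x ∈ S | φ x = 0} ≠ 2 := by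
  classical
  intro hcard
  obtain ⟨a, b, hab, hsec⟩ := card_eq_two.1 hcard
  have hmem (x) : x ∈ S ∧ φ x = 0 ↔ x = a ∨ x = b := by simpa using Finset.ext_iff.1 hsec x
  obtain ⟨x, hx, hφx, hxab⟩ := hS.exists_section_add_add_notMem hodd hab
    ((hmem a).2 (by simp)).2 ((hmem b).2 (by simp)).2
  have := ZModModule.add_self a
  have := ZModModule.add_self b
  grind

theorem CompleteSumFree.sum_section_ne_zero (hS : CompleteSumFree (S : Set V)) (hodd : Odd #S)
    {φ : Dual 𝔽₂ V} (hcard : #{x ∈ S | φ x = 0} = 4) : ∑ x ∈ S with φ x = 0, x ≠ 0 := by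
  classical
  intro hsum
  obtain ⟨a, t, hat, hsec, ht⟩ := card_eq_succ.1 hcard
  obtain ⟨b, c, d, hbc, hbd, hcd, rfl⟩ := card_eq_three.1 ht
  rw [← hsec, sum_insert hat, sum_insert (by simp [hbc, hbd]), sum_pair hcd] at hsum
  have hmem (x) : x ∈ S ∧ φ x = 0 ↔ x = a ∨ x = b ∨ x = c ∨ x = d := by
    simpa using (Finset.ext_iff.1 hsec x).symm
  obtain ⟨x, hx, hφx, hxab⟩ := hS.exists_section_add_add_notMem hodd (by grind : a ≠ b)
    ((hmem a).2 (by simp)).2 ((hmem b).2 (by simp)).2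
  have := ZModModule.add_self a
  have := ZModModule.add_self b
  have := ZModModule.add_self c
  have := ZModModule.add_self d
  grind

theorem CompleteSumFree.linearIndepOn_section (hS : CompleteSumFree (S : Set V)) (hodd : Odd #S)
    {φ : Dual 𝔽₂ V} (hle : #{x ∈ S | φ x = 0} ≤ 4) :
    LinearIndepOn 𝔽₂ id (↑{x ∈ S | φ x = 0} : Set V) := by
  have hsub : ({x ∈ S | φ x = 0} : Finset V) ⊆ S := filter_subset _ _
  exact linearIndepOn_of_disjoint_add (hS.disjoint_add.mono (Set.add_subset_add hsub hsub) hsub)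
    hle (hS.sum_section_ne_zero hodd)

theorem CompleteSumFree.section_nonempty [FiniteDimensional 𝔽₂ V] (hV : 2 ≤ finrank 𝔽₂ V)
    (hS : CompleteSumFree (S : Set V)) (hodd : Odd #S) (φ : Dual 𝔽₂ V) :
    ({x ∈ S | φ x = 0} : Finset V).Nonempty := by
  have hker := φ.finrank_range_add_finrank_ker
  have hrange : finrank 𝔽₂ φ.range ≤ 1 := by simpa using φ.range.finrank_le
  have : Nontrivial φ.ker := nontrivial_of_finrank_pos (R := 𝔽₂) (by omega)
  obtain ⟨⟨d, hφd⟩, hd⟩ := exists_ne (0 : φ.ker)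
  obtain ⟨x, hx, hφx, -⟩ := hS.exists_section_add_notMem hodd (by simpa using hd) hφd
  exact ⟨x, mem_filter.2 ⟨hx, hφx⟩⟩

end SmallSection

section AdaptedCoordinates

variable {K V ι κ : Type*} [Field K] [AddCommGroup V] [Module K V] [FiniteDimensional K V]
  [Fintype ι] [DecidableEq ι] [Fintype κ] {φ : Dual K V}

theorem exists_linearEquiv_pi_prod_pi {b : ι → V} (hb : LinearIndependent K b)
    (hV : finrank K V = Fintype.card ι + Fintype.card κ) :
    ∃ e : ((ι → K) × (κ → K)) ≃ₗ[K] V, ∀ i, e (Pi.single i 1, 0) = b i := by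
  let U := Submodule.span K (Set.range b)
  obtain ⟨U', hU⟩ := U.exists_isCompl
  have hfin : finrank K (κ → K) = finrank K U' := by
    have := Submodule.finrank_add_eq_of_isCompl hU
    rw [finrank_span_eq_card hb] at this
    rw [finrank_fintype_fun_eq_card]
    omega
  refine ⟨((Basis.span hb).equivFun.symm.prodCongr (LinearEquiv.ofFinrankEq _ _ hfin)) ≪≫ₗ
    Submodule.prodEquivOfIsCompl U U' hU, fun i => ?_⟩
  simp [Basis.span_apply]

theorem exists_linearEquiv_adapted (hφ : φ ≠ 0) {b : ι → V} (hb : LinearIndependent K b)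
    (hφb : ∀ i, φ (b i) = 0) (hV : finrank K V = Fintype.card ι + Fintype.card κ + 1) :
    ∃ e : ((ι → K) × (κ → K) × K) ≃ₗ[K] V,
      (∀ x, φ (e x) = x.2.2) ∧ ∀ i, e (Pi.single i 1, 0, 0) = b i := by
  have hker := Dual.finrank_ker_add_one_of_ne_zero hφ
  obtain ⟨e, he⟩ := exists_linearEquiv_pi_prod_pi (κ := κ)
    (b := fun i => (⟨b i, hφb i⟩ : φ.ker)) (.of_comp φ.ker.subtype hb) (by omega)
  obtain ⟨v, hv⟩ := LinearMap.surjective hφ 1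
  let f : ((ι → K) × (κ → K) × K) →ₗ[K] V :=
    LinearMap.coprod (φ.ker.subtype ∘ₗ e.toLinearMap) (LinearMap.toSpanSingleton K V v) ∘ₗ
      (LinearEquiv.prodAssoc K (ι → K) (κ → K) K).symm.toLinearMap
  have hf (x) : f x = e (x.1, x.2.1) + x.2.2 • v := rfl
  have hφf (x) : φ (f x) = x.2.2 := by simp [hf, hv]
  have hinj : Function.Injective f := by
    rw [injective_iff_map_eq_zero]
    rintro ⟨w, c, s⟩ h
    obtain rfl : s = 0 := by simpa [h] using (hφf (w, c, s)).symm
    simpa [hf] using h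
  refine ⟨LinearMap.linearEquivOfInjective f hinj (by simp [hV, add_assoc]), hφf, fun i => ?_⟩
  simp [hf, he]

theorem exists_linearEquiv_adapted_vector (hφ : φ ≠ 0) {a : V} (ha : a ≠ 0) (hφa : φ a = 0)
    (hV : finrank K V = Fintype.card κ + 2) :
    ∃ e : (K × (κ → K) × K) ≃ₗ[K] V, (∀ x, φ (e x) = x.2.2) ∧ e (1, 0, 0) = a := by
  obtain ⟨e, hφe, hea⟩ := exists_linearEquiv_adapted (κ := κ) hφ
    (LinearIndependent.of_subsingleton (v := fun _ : Unit => a) () ha) (fun _ => hφa)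
    (by rw [hV, Fintype.card_unit]; ring)
  refine ⟨((LinearEquiv.funUnique Unit K K).symm.prodCongr (.refl K ((κ → K) × K))) ≪≫ₗ e,
    fun x => hφe _, ?_⟩
  rw [← hea ()]
  refine congrArg (fun w => e (w, 0, 0)) (funext fun i => ?_)
  simp

end AdaptedCoordinates

section Hypercube

variable {ι : Type*} [Fintype ι]

/-- The part of a set of vertices of the hypercube `ι → 𝔽₂` in one of its two colour classes,
which are given by the parity of the vertex. -/
def layer (A : Finset (ι → 𝔽₂)) (j : 𝔽₂) : Finset (ι → 𝔽₂) := {w ∈ A | ∑ i, w i = j}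

theorem card_layer_zero_add_card_layer_one (A : Finset (ι → 𝔽₂)) :
    #(layer A 0) + #(layer A 1) = #A := by
  rw [← card_filter_add_card_filter_not (s := A) fun w => ∑ i, w i = 0]
  simp only [layer, ← zmod_two_ne_zero_iff, ne_eq]

variable [DecidableEq ι] {A : Finset (ι → 𝔽₂)} {w w' : ι → 𝔽₂} {j : 𝔽₂}

/-- A maximal independent set of vertices of the hypercube graph, whose edges join `w` and
`w + Pi.single i 1`. -/
def IsMaximalIndependent (A : Finset (ι → 𝔽₂)) : Prop :=
  ∀ w, w ∉ A ↔ ∃ i, w + Pi.single i 1 ∈ A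

/-- The neighbours of a vertex of the hypercube graph. -/
def neighbors (w : ι → 𝔽₂) : Finset (ι → 𝔽₂) := univ.image fun i => w + Pi.single i 1

theorem card_neighbors (w : ι → 𝔽₂) : #(neighbors w) = Fintype.card ι := by
  refine card_image_of_injective _ fun i j hij => ?_
  simpa [Pi.single_apply] using congr_fun (add_left_cancel hij) i

theorem card_neighbors_inter_le_two (h : w ≠ w') : #(neighbors w ∩ neighbors w') ≤ 2 := by
  obtain hempty | ⟨z, hz⟩ := (neighbors w ∩ neighbors w').eq_empty_or_nonempty
  · simp [hempty]
  simp only [neighbors, mem_inter, mem_image, mem_univ, true_and] at hz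
  obtain ⟨⟨i, rfl⟩, j, hj⟩ := hz
  refine (card_le_card (t := {w + Pi.single i 1, w + Pi.single j 1}) ?_).trans card_le_two
  intro z hz
  simp only [neighbors, mem_inter, mem_image, mem_univ, true_and] at hz
  obtain ⟨⟨k, rfl⟩, l, hl⟩ := hz
  suffices k = i ∨ k = j by rcases this with rfl | rfl <;> simp
  have hkl : k ≠ l := by rintro rfl; exact h (add_right_cancel hl).symm
  by_contra! hk
  have hww' : w' k = w k := by simpa [hk] using congr_fun hj k
  simpa [hkl, hww'] using congr_fun hl k

theorem neighbors_subset (hA : IsMaximalIndependent A) (hw : w ∈ layer A j) :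
    neighbors w ⊆ layer univ (j + 1) \ layer A (j + 1) := by
  simp only [layer, mem_filter] at hw
  simp only [subset_iff, neighbors, layer, mem_image, mem_univ, true_and, forall_exists_index,
    mem_sdiff, mem_filter, not_and]
  rintro _ i rfl
  have : w + Pi.single i 1 ∉ A := (hA _).2 ⟨i, by simpa [add_assoc, ZModModule.add_self] using hw.1⟩
  simp [this, sum_add_distrib, hw.2]

theorem card_layer_le_card_layer_univ (A : Finset (ι → 𝔽₂)) (j : 𝔽₂) :
    #(layer A j) ≤ #(layer (univ : Finset (ι → 𝔽₂)) j) :=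
  card_le_card (filter_subset_filter _ (subset_univ A))

theorem card_layer_add_card_le_of_disjoint {B : Finset (ι → 𝔽₂)}
    (hB : B ⊆ layer univ j \ layer A j) :
    #(layer A j) + #B ≤ #(layer (univ : Finset (ι → 𝔽₂)) j) := by
  have hsdiff : #(layer univ j \ layer A j) + #(layer A j) = #(layer univ j) :=
    card_sdiff_add_card_eq_card (filter_subset_filter _ (subset_univ A))
  have hle := card_le_card hB
  omega

theorem card_layer_add_card_le (hA : IsMaximalIndependent A) (h : 1 ≤ #(layer A j)) :
    #(layer A (j + 1)) + Fintype.card ι ≤ #(layer (univ : Finset (ι → 𝔽₂)) (j + 1)) := by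
  obtain ⟨w, hw⟩ := card_pos.1 h
  rw [← card_neighbors w]
  exact card_layer_add_card_le_of_disjoint (neighbors_subset hA hw)

theorem card_layer_add_two_mul_card_le (hA : IsMaximalIndependent A) (h : 2 ≤ #(layer A j)) :
    #(layer A (j + 1)) + 2 * Fintype.card ι ≤ #(layer (univ : Finset (ι → 𝔽₂)) (j + 1)) + 2 := by
  obtain ⟨w, hw, w', hw', hne⟩ := one_lt_card.1 h
  have hle := card_layer_add_card_le_of_disjoint
    (union_subset (neighbors_subset hA hw) (neighbors_subset hA hw'))
  have hunion := card_union_add_card_inter (neighbors w) (neighbors w')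
  have hinter := card_neighbors_inter_le_two hne
  rw [card_neighbors, card_neighbors] at hunion
  omega

theorem card_layer_univ_le (hA : IsMaximalIndependent A) :
    #(layer (univ : Finset (ι → 𝔽₂)) j) ≤ #(layer A j) + #(layer A (j + 1)) * Fintype.card ι := by
  calc #(layer (univ : Finset (ι → 𝔽₂)) j)
      ≤ #(layer A j ∪ (layer A (j + 1)).biUnion neighbors) := card_le_card fun w hw => ?_
    _ ≤ #(layer A j) + ∑ v ∈ layer A (j + 1), #(neighbors v) :=
        (card_union_le _ _).trans (by gcongr; exact card_biUnion_le)
    _ = #(layer A j) + #(layer A (j + 1)) * Fintype.card ι := by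
        simp [card_neighbors]
  by_cases hwA : w ∈ A
  · exact mem_union_left _ (by simpa [layer, hwA] using hw)
  obtain ⟨i, hi⟩ := (hA w).1 hwA
  refine mem_union_right _ (mem_biUnion.2 ⟨w + Pi.single i 1, ?_, mem_image.2 ⟨i, mem_univ i, ?_⟩⟩)
  · simp_all [layer, sum_add_distrib]
  · simp [add_assoc, ZModModule.add_self]

end Hypercube

section Fibers

variable {V ι κ : Type*} [AddCommGroup V] [Module 𝔽₂ V] [DecidableEq V]
  [Fintype ι] [DecidableEq ι] {S : Finset V} {e : ((ι → 𝔽₂) × (κ → 𝔽₂) × 𝔽₂) ≃ₗ[𝔽₂] V}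

/-- The part of `S` in the coset with coordinates `(c, 1)` of the subspace spanned by the
`ι`-coordinates, as a set of vertices of the hypercube `ι → 𝔽₂`. -/
def fiber (e : ((ι → 𝔽₂) × (κ → 𝔽₂) × 𝔽₂) ≃ₗ[𝔽₂] V) (S : Finset V) (c : κ → 𝔽₂) :
    Finset (ι → 𝔽₂) := {w | e (w, c, 1) ∈ S}

theorem isMaximalIndependent_fiber (hS : CompleteSumFree (S : Set V))
    (he : ∀ x, x.2.2 = 0 → (e x ∈ S ↔ ∃ i, x = (Pi.single i 1, 0, 0))) (c : κ → 𝔽₂) :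
    IsMaximalIndependent (fiber e S c) := by
  intro w
  have hsum (i : ι) : e (Pi.single i 1, 0, 0) + e (w + Pi.single i 1, c, 1) = e (w, c, 1) := by
    rw [← map_add]
    simp [add_left_comm, ZModModule.add_self]
  simp only [fiber, mem_filter_univ]
  constructor
  · intro hw
    obtain ⟨a, ha, b, hb, hab⟩ := hS.exists_add_eq hw
    obtain ⟨a, rfl⟩ := e.surjective a
    obtain ⟨b, rfl⟩ := e.surjective b
    wlog ha0 : a.2.2 = 0 generalizing a b
    · have parity : ∀ s t : 𝔽₂, s + t = 1 → s ≠ 0 → t = 0 := by decide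
      rw [← map_add, e.injective.eq_iff] at hab
      exact this b hb a ha (by rw [← map_add, add_comm, hab])
        (parity _ _ (congrArg (·.2.2) hab) ha0)
    obtain ⟨i, rfl⟩ := (he _ ha0).1 ha
    exact ⟨i, by rwa [← add_left_cancel ((hsum i).trans hab.symm)] at hb⟩
  · rintro ⟨i, hi⟩
    exact hsum i ▸ hS.add_notMem ((he _ rfl).2 ⟨i, rfl⟩) hi

theorem card_filter_eq_sum_card_fiber [Fintype κ] [DecidableEq κ] {φ : Dual 𝔽₂ V}
    (hφ : ∀ x, φ (e x) = x.2.2) (P : V → Prop) [DecidablePred P] :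
    #{x ∈ S | φ x = 1 ∧ P x} = ∑ c, #{w ∈ fiber e S c | P (e (w, c, 1))} := by
  rw [← card_sigma]
  refine (card_bij (fun p _ => e (p.2, p.1, 1)) ?_ ?_ fun x hx => ?_).symm
  · simp [fiber, hφ]
  · rintro ⟨c, w⟩ - ⟨c', w'⟩ - h
    simp_all
  · obtain ⟨⟨w, c, s⟩, rfl⟩ := e.surjective x
    obtain ⟨hx, rfl, hP⟩ : e (w, c, s) ∈ S ∧ s = 1 ∧ P (e (w, c, s)) := by simpa [hφ] using hx
    exact ⟨⟨c, w⟩, by simp [fiber, hx, hP], rfl⟩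

theorem exists_isMaximalIndependent_family [Fintype κ] [DecidableEq κ] [FiniteDimensional 𝔽₂ V]
    (hS : CompleteSumFree (S : Set V)) {φ : Dual 𝔽₂ V} (hφ : φ ≠ 0) {b : ι → V}
    (hb : LinearIndependent 𝔽₂ b) (hφb : {x ∈ S | φ x = 0} = univ.image b)
    (hV : finrank 𝔽₂ V = Fintype.card ι + Fintype.card κ + 1) :
    ∃ A : (κ → 𝔽₂) → Finset (ι → 𝔽₂), (∀ c, IsMaximalIndependent (A c)) ∧
      #S = Fintype.card ι + ∑ c, #(A c) ∧
      ∀ ℓ : κ → 𝔽₂, ∀ γ, ∃ ψ : Dual 𝔽₂ V,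
        #{x ∈ S | ψ x = 0} = ∑ c, #(layer (A c) (ℓ ⬝ᵥ c + γ)) := by
  have hbS (i : ι) : b i ∈ S ∧ φ (b i) = 0 :=
    mem_filter.1 (hφb ▸ mem_image_of_mem b (mem_univ i))
  obtain ⟨e, hφe, heb⟩ := exists_linearEquiv_adapted (κ := κ) hφ hb (fun i => (hbS i).2) hV
  have hsec (x) (hx : x.2.2 = 0) : e x ∈ S ↔ ∃ i, x = (Pi.single i 1, 0, 0) := by
    have := Finset.ext_iff.1 hφb (e x)
    simpa [hφe, hx, ← heb, eq_comm] using this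
  refine ⟨fiber e S, isMaximalIndependent_fiber hS hsec, ?_, fun ℓ γ => ?_⟩
  · have hcompl : #{x ∈ S | ¬ φ x = 0} = ∑ c, #(fiber e S c) := by
      have := card_filter_eq_sum_card_fiber (S := S) hφe fun _ => True
      simpa [zmod_two_ne_zero_iff] using this
    rw [← card_filter_add_card_filter_not (φ · = 0), hφb, card_image_of_injective _ hb.injective,
      card_univ, hcompl]
  · let ψ : Dual 𝔽₂ V := ((∑ i, LinearMap.proj i).coprod ((∑ k, ℓ k • LinearMap.proj k).coprod
      (LinearMap.toSpanSingleton 𝔽₂ 𝔽₂ γ))) ∘ₗ e.symm.toLinearMap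
    have hψ (w c s) : ψ (e (w, c, s)) = ∑ i, w i + (ℓ ⬝ᵥ c + s * γ) := by
      simp [ψ, LinearMap.sum_apply, dotProduct]
    have hψS (x) (hx : x ∈ S) (h0 : ψ x = 0) : φ x = 1 := by
      rw [← zmod_two_ne_zero_iff]
      intro hφx
      obtain ⟨i, -, rfl⟩ := mem_image.1 (hφb ▸ mem_filter.2 ⟨hx, hφx⟩)
      simp [← heb, hψ] at h0
    refine ⟨ψ, ?_⟩
    calc #{x ∈ S | ψ x = 0}
        = #{x ∈ S | φ x = 1 ∧ ψ x = 0} := by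
          congr 1
          exact filter_congr fun x hx => ⟨fun h => ⟨hψS x hx h, h⟩, And.right⟩
      _ = ∑ c, #(layer (fiber e S c) (ℓ ⬝ᵥ c + γ)) := by
          simp [card_filter_eq_sum_card_fiber hφe fun x => ψ x = 0, hψ, layer, CharTwo.add_eq_zero]

end Fibers

section Tangent

theorem card_layers_of_fin_three {A : Finset (Fin 3 → 𝔽₂)} (hA : IsMaximalIndependent A) :
    #(layer A 0) = 4 ∧ #(layer A 1) = 0 ∨ #(layer A 0) = 0 ∧ #(layer A 1) = 4 ∨
      #(layer A 0) = 1 ∧ #(layer A 1) = 1 := by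
  have hX : ∀ j, #(layer (univ : Finset (Fin 3 → 𝔽₂)) j) = 4 := by decide
  have hle := zmod_two_forall.1 (card_layer_le_card_layer_univ A)
  have hone := zmod_two_forall.1 fun j => card_layer_add_card_le hA (j := j)
  have hdom := zmod_two_forall.1 fun j => card_layer_univ_le hA (j := j)
  simp only [hX, zero_add, CharTwo.add_self_eq_zero, Fintype.card_fin] at hle hone hdom
  omega

theorem card_layers_of_fin_four {A : Finset (Fin 4 → 𝔽₂)} (hA : IsMaximalIndependent A) :
    #(layer A 0) = 8 ∧ #(layer A 1) = 0 ∨ #(layer A 0) = 0 ∧ #(layer A 1) = 8 ∨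
      #(layer A 0) + #(layer A 1) ≤ 5 := by
  have hX : ∀ j, #(layer (univ : Finset (Fin 4 → 𝔽₂)) j) = 8 := by decide
  have hle := zmod_two_forall.1 (card_layer_le_card_layer_univ A)
  have hone := zmod_two_forall.1 fun j => card_layer_add_card_le hA (j := j)
  have htwo := zmod_two_forall.1 fun j => card_layer_add_two_mul_card_le hA (j := j)
  have hdom := zmod_two_forall.1 fun j => card_layer_univ_le hA (j := j)
  simp only [hX, zero_add, CharTwo.add_self_eq_zero, Fintype.card_fin] at hle hone htwo hdom
  omega

theorem exists_fin_linearIndependent_eq_image {K V : Type*} [Field K] [AddCommGroup V] [Module K V]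
    [DecidableEq V] {A : Finset V} {k : ℕ} (hA : LinearIndepOn K id (A : Set V)) (hk : #A = k) :
    ∃ b : Fin k → V, LinearIndependent K b ∧ A = univ.image b := by
  let e := A.equivFinOfCardEq hk
  refine ⟨fun i => e.symm i, hA.linearIndependent.comp _ e.symm.injective, ?_⟩
  ext x
  simp only [mem_image, mem_univ, true_and]
  exact ⟨fun hx => ⟨e ⟨x, hx⟩, by simp⟩, by rintro ⟨i, rfl⟩; exact (e.symm i).2⟩

variable {V : Type*} [AddCommGroup V] [Module 𝔽₂ V] [FiniteDimensional 𝔽₂ V] {S : Finset V}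
  {φ : Dual 𝔽₂ V}

theorem exists_card_section_lt_three (hV : finrank 𝔽₂ V = 6)
    (hS : CompleteSumFree (S : Set V)) (hcard : #S = 17) (hφ : φ ≠ 0)
    (hind : LinearIndepOn 𝔽₂ id (↑{x ∈ S | φ x = 0} : Set V)) (hsec : #{x ∈ S | φ x = 0} = 3) :
    ∃ ψ : Dual 𝔽₂ V, #{x ∈ S | ψ x = 0} < 3 := by
  classical
  obtain ⟨b, hb, himage⟩ := exists_fin_linearIndependent_eq_image hind hsec
  obtain ⟨A, hA, hsum, hψ⟩ :=
    exists_isMaximalIndependent_family (κ := Fin 2) hS hφ hb himage (by simp [hV])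
  by_contra! hlarge
  have huniv : (univ : Finset (Fin 2 → 𝔽₂)) = {![0, 0], ![0, 1], ![1, 0], ![1, 1]} := by decide
  have hsections (p q γ : 𝔽₂) : 3 ≤ #(layer (A ![0, 0]) γ) + (#(layer (A ![0, 1]) (q + γ)) +
      (#(layer (A ![1, 0]) (p + γ)) + #(layer (A ![1, 1]) (p + q + γ)))) := by
    obtain ⟨ψ, h⟩ := hψ ![p, q] γ
    simpa [h, huniv] using hlarge ψ
  have hlayers (c) := card_layers_of_fin_three (hA c)
  simp only [zmod_two_forall, zero_add, add_zero, CharTwo.add_self_eq_zero] at hsections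
  have hcardA (c) := card_layer_zero_add_card_layer_one (A c)
  simp only [hcard, huniv, ← hcardA, Fintype.card_fin] at hsum
  rw [sum_insert (by decide), sum_insert (by decide), sum_pair (by decide)] at hsum
  -- Of the four sets three are full layers and one has two points, so that some section avoids the
  -- three full layers and has a single point.
  have := hlayers ![0, 0]
  have := hlayers ![0, 1]
  have := hlayers ![1, 0]
  have := hlayers ![1, 1]
  omega

theorem exists_card_section_lt_four (hV : finrank 𝔽₂ V = 6)
    (hS : CompleteSumFree (S : Set V)) (hcard : #S = 17) (hφ : φ ≠ 0)
    (hind : LinearIndepOn 𝔽₂ id (↑{x ∈ S | φ x = 0} : Set V)) (hsec : #{x ∈ S | φ x = 0} = 4) :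
    ∃ ψ : Dual 𝔽₂ V, #{x ∈ S | ψ x = 0} < 4 := by
  classical
  obtain ⟨b, hb, himage⟩ := exists_fin_linearIndependent_eq_image hind hsec
  obtain ⟨A, hA, hsum, hψ⟩ :=
    exists_isMaximalIndependent_family (κ := Fin 1) hS hφ hb himage (by simp [hV])
  by_contra! hlarge
  have huniv : (univ : Finset (Fin 1 → 𝔽₂)) = {![0], ![1]} := by decide
  have hsections (p γ : 𝔽₂) : 4 ≤ #(layer (A ![0]) γ) + #(layer (A ![1]) (p + γ)) := by
    obtain ⟨ψ, h⟩ := hψ ![p] γ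
    simpa [h, huniv] using hlarge ψ
  have hlayers (c) := card_layers_of_fin_four (hA c)
  simp only [zmod_two_forall, zero_add, add_zero, CharTwo.add_self_eq_zero] at hsections
  have hcardA (c) := card_layer_zero_add_card_layer_one (A c)
  simp only [hcard, huniv, ← hcardA, Fintype.card_fin] at hsum
  rw [sum_pair (by decide)] at hsum
  -- One of the two sets is a full layer and the other has five points, so that some section avoids
  -- the full layer and has at most two points.
  have := hlayers ![0]
  have := hlayers ![1]
  omega

theorem exists_card_section_eq_one (hV : finrank 𝔽₂ V = 6)
    (hS : CompleteSumFree (S : Set V)) (hcard : #S = 17) :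
    ∃ φ : Dual 𝔽₂ V, φ ≠ 0 ∧ #{x ∈ S | φ x = 0} = 1 := by
  classical
  have : Finite (Dual 𝔽₂ V) := Module.finite_of_finite 𝔽₂
  obtain ⟨φ, hmin⟩ := Finite.exists_min fun φ : Dual 𝔽₂ V => #{x ∈ S | φ x = 0}
  obtain ⟨φ₀, hφ₀⟩ := exists_card_section_le_four hV hS.disjoint_add hcard
  have hle := (hmin φ₀).trans hφ₀
  have hφ : φ ≠ 0 := by rintro rfl; simp [hcard] at hle
  have hodd : Odd #S := hcard ▸ by decide
  have hind := hS.linearIndepOn_section hodd hle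
  have hpos := (hS.section_nonempty (by omega) hodd φ).card_pos
  have hne_two := hS.card_section_ne_two hodd φ
  refine ⟨φ, hφ, ?_⟩
  by_contra hone
  obtain h | h : #{x ∈ S | φ x = 0} = 3 ∨ #{x ∈ S | φ x = 0} = 4 := by omega
  · obtain ⟨ψ, hψ⟩ := exists_card_section_lt_three hV hS hcard hφ hind h
    exact absurd (hmin ψ) (by omega)
  · obtain ⟨ψ, hψ⟩ := exists_card_section_lt_four hV hS hcard hφ hind h
    exact absurd (hmin ψ) (by omega)

end Tangent

section GraphCap

variable {W W' : Type*} [AddCommGroup W] [AddCommGroup W'] {f : W → 𝔽₂} {g : W' → 𝔽₂}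

/-- The graph of `f`, placed in the affine hyperplane on which the last coordinate is `1`, together
with its point at infinity. -/
def graphCap (f : W → 𝔽₂) : Set (𝔽₂ × W × 𝔽₂) :=
  insert (1, 0, 0) (Set.range fun x => (f x, x, 1))

/-- A Boolean function without linear structures: no derivative in a direction `u ≠ 0` is constant,
that is, each of them takes both values `c`. -/
def NoLinearStructure (f : W → 𝔽₂) : Prop :=
  ∀ u ≠ 0, ∀ c, ∃ x, f (x + u) + f x = c

theorem mem_graphCap {y s : 𝔽₂} {u : W} :
    (y, u, s) ∈ graphCap f ↔ (y, u, s) = (1, 0, 0) ∨ s = 1 ∧ y = f u := by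
  simp [graphCap, eq_comm, and_comm]

theorem ncard_graphCap [Finite W] (f : W → 𝔽₂) : (graphCap f).ncard = Nat.card W + 1 := by
  have hinj : Function.Injective fun x => (f x, x, (1 : 𝔽₂)) := fun x y h => by simp_all
  rw [graphCap, Set.ncard_insert_of_notMem (by simp) (Set.toFinite _), ← Set.image_univ,
    Set.ncard_image_of_injective _ hinj, Set.ncard_univ]

variable [Module 𝔽₂ W] [Module 𝔽₂ W']

theorem mem_graphCap_add_graphCap {y s : 𝔽₂} {u : W} :
    (y, u, s) ∈ graphCap f + graphCap f ↔
      s = 1 ∧ y = f u + 1 ∨ s = 0 ∧ ∃ x, f (x + u) + f x = y := by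
  have add_self : ∀ x : W, x + x = 0 := ZModModule.add_self
  constructor
  · rintro ⟨_, rfl | ⟨v, rfl⟩, _, rfl | ⟨w, rfl⟩, h⟩
    all_goals
      simp only [Prod.mk_add_mk, Prod.mk.injEq] at h
      obtain ⟨rfl, rfl, rfl⟩ := h
    · exact .inr ⟨by decide, 0, by simp [CharTwo.add_self_eq_zero]⟩
    · exact .inl (by simp [add_comm])
    · exact .inl (by simp)
    · refine .inr ⟨by decide, v, ?_⟩
      rw [← add_assoc, add_self, zero_add, add_comm]
  · rintro (⟨rfl, rfl⟩ | ⟨rfl, x, rfl⟩)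
    · exact ⟨_, .inr ⟨u, rfl⟩, _, .inl rfl, by simp⟩
    · refine ⟨_, .inr ⟨x + u, rfl⟩, _, .inr ⟨x, rfl⟩, ?_⟩
      simp [add_right_comm x u x, add_self, CharTwo.add_self_eq_zero]

theorem completeSumFree_graphCap_iff : CompleteSumFree (graphCap f) ↔ NoLinearStructure f := by
  constructor
  · intro h u hu c
    simpa [mem_graphCap, mem_graphCap_add_graphCap, hu] using Set.ext_iff.1 h (c, u, 0)
  · intro h
    ext ⟨y, u, s⟩
    rw [mem_graphCap_add_graphCap, Set.mem_compl_iff, mem_graphCap]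
    obtain rfl | rfl := zmod_two_eq_zero_or_one s
    · obtain rfl | hu := eq_or_ne u 0
      · obtain rfl | rfl := zmod_two_eq_zero_or_one y
        all_goals simp [CharTwo.add_self_eq_zero]
      · simp [hu, h u hu y]
    · have parity : ∀ t : 𝔽₂, y = t + 1 ↔ y ≠ t := by revert y; decide
      simp [parity]

/-- Extended affine equivalence of Boolean functions: equality up to an affine substitution and the
addition of an affine function. -/
def ExtendedAffineEquiv (f : W → 𝔽₂) (g : W' → 𝔽₂) : Prop :=
  ∃ (e : W' ≃ₗ[𝔽₂] W) (a : W) (ℓ : Dual 𝔽₂ W') (c : 𝔽₂), ∀ x, g x = f (e x + a) + ℓ x + c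

theorem ExtendedAffineEquiv.exists_linearEquiv_image_graphCap (h : ExtendedAffineEquiv f g) :
    ∃ e : (𝔽₂ × W' × 𝔽₂) ≃ₗ[𝔽₂] (𝔽₂ × W × 𝔽₂), e '' graphCap g = graphCap f := by
  obtain ⟨e, a, ℓ, c, hg⟩ := h
  have add_self : ∀ x : W, x + x = 0 := ZModModule.add_self
  let E : (𝔽₂ × W' × 𝔽₂) ≃ₗ[𝔽₂] (𝔽₂ × W × 𝔽₂) :=
    { toFun p := (p.1 + ℓ p.2.1 + p.2.2 * c, e p.2.1 + p.2.2 • a, p.2.2)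
      map_add' p q := by ext <;> simp [add_smul, add_mul] <;> abel
      map_smul' r p := by ext <;> simp [mul_smul]; ring
      invFun p :=
        (p.1 + ℓ (e.symm (p.2.1 + p.2.2 • a)) + p.2.2 * c, e.symm (p.2.1 + p.2.2 • a), p.2.2)
      left_inv p := by
        ext
        · simp only [map_add, LinearEquiv.symm_apply_apply, map_smul, smul_eq_mul]
          grind
        · simp [add_assoc, add_self]
        · rfl
      right_inv p := by
        ext
        · simp only [map_add, map_smul, smul_eq_mul]
          grind
        · simp [add_assoc, add_self]
        · rfl }
  refine ⟨E, ?_⟩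
  have hgraph (x : W') : E (g x, x, 1) = (f (e x + a), e x + a, 1) := by
    simp [E, hg, add_assoc, CharTwo.add_self_eq_zero]
  rw [graphCap, graphCap, Set.image_insert_eq, ← Set.range_comp,
    ← (e.toEquiv.trans (Equiv.addRight a)).surjective.range_comp]
  congr 2
  · simp [E]
  · exact funext hgraph

theorem CompleteSumFree.exists_linearEquiv_image_graphCap {V κ : Type*} [AddCommGroup V]
    [Module 𝔽₂ V] [FiniteDimensional 𝔽₂ V] [Fintype κ] {S : Set V} {φ : Dual 𝔽₂ V} {a : V}
    (hS : CompleteSumFree S) (hφ : φ ≠ 0) (ha : ∀ x, x ∈ S ∧ φ x = 0 ↔ x = a)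
    (hV : finrank 𝔽₂ V = Fintype.card κ + 2) :
    ∃ (f : (κ → 𝔽₂) → 𝔽₂) (e : (𝔽₂ × (κ → 𝔽₂) × 𝔽₂) ≃ₗ[𝔽₂] V), e '' graphCap f = S := by
  classical
  obtain ⟨haS, hφa⟩ := (ha a).2 rfl
  obtain ⟨e, hφe, rfl⟩ := exists_linearEquiv_adapted_vector hφ
    (ne_of_mem_of_not_mem haS hS.zero_notMem) hφa hV
  have hpair (y : 𝔽₂) (c) : e (y, c, 1) ∈ S ↔ e (y + 1, c, 1) ∉ S := by
    have hadd : e (1, 0, 0) + e (y, c, 1) = e (y + 1, c, 1) := by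
      rw [← map_add]
      simp [add_comm]
    refine ⟨fun h => hadd ▸ hS.add_notMem haS h, fun h => ?_⟩
    obtain ⟨s, hs, t, ht, hst⟩ := hS.exists_add_eq h
    wlog hφs : φ s = 0 generalizing s t
    · have parity : ∀ s t : 𝔽₂, s + t = 1 → s ≠ 0 → t = 0 := by decide
      exact this t ht s hs (by rwa [add_comm]) (parity _ _ (by rw [← map_add, hst, hφe]) hφs)
    obtain rfl := (ha s).1 ⟨hs, hφs⟩
    rwa [← add_left_cancel (hst.trans hadd.symm)]
  refine ⟨fun c => if e (0, c, 1) ∈ S then 0 else 1, e, ?_⟩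
  ext x
  obtain ⟨⟨y, c, s⟩, rfl⟩ := e.surjective x
  rw [e.injective.mem_set_image, mem_graphCap]
  obtain rfl | rfl := zmod_two_eq_zero_or_one s
  · have := ha (e (y, c, 0))
    simpa [hφe, eq_comm] using this.symm
  · have := hpair 0 c
    rw [zero_add] at this
    obtain rfl | rfl := zmod_two_eq_zero_or_one y
    · simp
    · simp only [Prod.mk.injEq, one_ne_zero, and_false, right_eq_ite_iff, imp_false, true_and,
        false_or]
      tauto

end GraphCap

section BooleanFunction

variable {W : Type*} [AddCommGroup W] [Module 𝔽₂ W] {f : W → 𝔽₂}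

theorem exists_dual_of_add_eq {h : W → 𝔽₂} (hh : ∀ u v, h (u + v) = h u + h v + h 0) :
    ∃ ℓ : Dual 𝔽₂ W, ∀ x, h x = ℓ x + h 0 := by
  let ℓ : W →+ 𝔽₂ := AddMonoidHom.mk' (fun x => h x + h 0) fun u v => by grind
  exact ⟨ℓ.toZModLinearMap 2, fun x => (CharTwo.add_cancel_right (h x) (h 0)).symm⟩

variable [Fintype W]

/-- The sum of the points at which the Boolean function `f` takes the value `1`. -/
def supportSum (f : W → 𝔽₂) : W := ∑ x, f x • x

theorem sum_comp_eq_zero {M : Type*} [AddCommGroup M] [Module 𝔽₂ M] [Fintype M] (L : M →ₗ[𝔽₂] W)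
    (hfin : finrank 𝔽₂ W = finrank 𝔽₂ M + 1) (hf : ∑ x, f x = 0) (hL : supportSum f ∈ L.range) :
    ∑ y, f (L y) = 0 := by
  by_cases hinj : Function.Injective L
  · have hrange : finrank 𝔽₂ L.range = finrank 𝔽₂ M := LinearMap.finrank_range_of_inj hinj
    have hlt : L.range < ⊤ := lt_top_iff_ne_top.2 fun h => by
      rw [h, finrank_top] at hrange
      omega
    obtain ⟨ℓ, hℓ, hle⟩ := L.range.exists_le_ker_of_lt_top hlt
    have hker := Dual.finrank_ker_add_one_of_ne_zero hℓ
    have heq : L.range = ℓ.ker := Submodule.eq_of_le_of_finrank_eq hle (by omega)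
    -- `1 + ℓ` is the indicator of the hyperplane `L.range`.
    calc ∑ y, f (L y) = ∑ x, (1 + ℓ x) * f x := by
          refine sum_of_injOn L hinj.injOn (by simp) (fun x _ hx => ?_) fun y _ => ?_
          · have hℓx : ℓ x ≠ 0 := fun h => by
              obtain ⟨y, rfl⟩ : x ∈ L.range := heq.ge h
              exact hx ⟨y, by simp⟩
            rw [zmod_two_ne_zero_iff.1 hℓx, CharTwo.add_self_eq_zero, zero_mul]
          · rw [LinearMap.mem_ker.1 (hle (LinearMap.mem_range_self L y)), add_zero, one_mul]
      _ = ∑ x, f x + ℓ (supportSum f) := by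
          simp [add_mul, sum_add_distrib, supportSum, mul_comm (ℓ _)]
      _ = 0 := by rw [hf, LinearMap.mem_ker.1 (hle hL), add_zero]
  · obtain ⟨k, hLk, hk⟩ : ∃ k, L k = 0 ∧ k ≠ 0 := by
      simpa [injective_iff_map_eq_zero] using hinj
    refine sum_involution (fun y _ => y + k) (fun y _ => ?_) (fun y _ _ => by simpa)
      (fun y _ => mem_univ _) fun y _ => ?_
    · rw [map_add, hLk, add_zero, CharTwo.add_self_eq_zero]
    · rw [add_assoc, ZModModule.add_self, add_zero]

theorem sum_flat_eq_zero (hW : finrank 𝔽₂ W = 4) (hf : ∑ x, f x = 0) {a u v : W}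
    (ha : supportSum f ∈ Submodule.span 𝔽₂ {a, u, v}) :
    f 0 + f v + (f u + f (u + v)) + (f a + f (a + v) + (f (a + u) + f (a + (u + v)))) = 0 := by
  let L : (𝔽₂ × 𝔽₂ × 𝔽₂) →ₗ[𝔽₂] W := (LinearMap.toSpanSingleton 𝔽₂ W a).coprod
    ((LinearMap.toSpanSingleton 𝔽₂ W u).coprod (LinearMap.toSpanSingleton 𝔽₂ W v))
  have hL : supportSum f ∈ L.range := by
    simpa [L, LinearMap.range_coprod, LinearMap.range_toSpanSingleton, Submodule.span_insert]
      using ha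
  have hsum := sum_comp_eq_zero L (by simp [hW]) hf hL
  have sum_zmod_two (F : 𝔽₂ → 𝔽₂) : ∑ t, F t = F 0 + F 1 := Fin.sum_univ_two F
  simpa [Fintype.sum_prod_type, sum_zmod_two, L] using hsum

theorem exists_dual_of_supportSum_mem_span (hW : finrank 𝔽₂ W = 4) (hf : ∑ x, f x = 0) {a : W}
    (ha : supportSum f ∈ Submodule.span 𝔽₂ {a}) :
    ∃ (ℓ : Dual 𝔽₂ W) (κ : 𝔽₂), ∀ x, f (x + a) = f x + ℓ x + κ := by
  obtain ⟨ℓ, hℓ⟩ := exists_dual_of_add_eq (h := fun x => f (x + a) + f x) fun u v => by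
    have hspan := Submodule.span_mono (Set.singleton_subset_iff.2 (Set.mem_insert a {u, v})) ha
    have := sum_flat_eq_zero hW hf hspan
    simp only [add_comm _ a, add_zero]
    grind
  refine ⟨ℓ, f (0 + a) + f 0, fun x => ?_⟩
  have := hℓ x
  grind

end BooleanFunction

section NormalForm

theorem exists_polynomial_expansion (h : 𝔽₂ → 𝔽₂ → 𝔽₂ → 𝔽₂) :
    ∃ c γ β₁ β₂ α₀ α₁ α₂ d, ∀ p q r, h p q r = c * (p * q * r) + γ * (p * q) + β₁ * (p * r) +
      β₂ * (q * r) + α₀ * r + α₁ * p + α₂ * q + d := by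
  refine ⟨h 0 0 0 + h 0 0 1 + h 0 1 0 + h 0 1 1 + h 1 0 0 + h 1 0 1 + h 1 1 0 + h 1 1 1,
    h 0 0 0 + h 0 1 0 + h 1 0 0 + h 1 1 0, h 0 0 0 + h 0 0 1 + h 1 0 0 + h 1 0 1,
    h 0 0 0 + h 0 0 1 + h 0 1 0 + h 0 1 1, h 0 0 0 + h 0 0 1, h 0 0 0 + h 1 0 0,
    h 0 0 0 + h 0 1 0, h 0 0 0, ?_⟩
  simp only [zmod_two_forall]
  grind

/-- The polynomial `x₀x₁ + c x₀x₂x₃ + γ x₂x₃`, a normal form for the functions in four variables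
that have an affine, nonconstant derivative. -/
def normalForm (c γ : 𝔽₂) (x : Fin 4 → 𝔽₂) : 𝔽₂ :=
  x 0 * x 1 + c * (x 0 * x 2 * x 3) + γ * (x 2 * x 3)

variable {W : Type*} [AddCommGroup W] [Module 𝔽₂ W] [FiniteDimensional 𝔽₂ W] {f : W → 𝔽₂}

theorem exists_linearEquiv_normalForm (hW : finrank 𝔽₂ W = 4) {a : W} (ha : a ≠ 0)
    {φ : Dual 𝔽₂ W} (hφ : φ ≠ 0) {κ : 𝔽₂} (hf : ∀ x, f (x + a) = f x + φ x + κ) :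
    ∃ (c γ : 𝔽₂) (e : (Fin 4 → 𝔽₂) ≃ₗ[𝔽₂] W) (ℓ : Dual 𝔽₂ (Fin 4 → 𝔽₂)) (d : 𝔽₂),
      ∀ x, f (e x) = normalForm c γ x + ℓ x + d := by
  have hφa : φ a = 0 := by
    have h₁ := hf 0
    have h₂ := hf a
    rw [ZModModule.add_self] at h₂
    rw [zero_add, map_zero] at h₁
    grind
  obtain ⟨e, hφe, rfl⟩ := exists_linearEquiv_adapted_vector (κ := Fin 2) hφ ha hφa hW
  have hfe (y : 𝔽₂) (w s) : f (e (y, w, s)) = f (e (0, w, s)) + y * (s + κ) := by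
    obtain rfl | rfl := zmod_two_eq_zero_or_one y
    · simp
    · simpa [hφe, ← map_add, add_assoc] using hf (e (0, w, s))
  obtain ⟨c, γ, β₁, β₂, α₀, α₁, α₂, d, hexp⟩ :=
    exists_polynomial_expansion fun p q r => f (e (0, ![p, q], r))
  let x (i : Fin 4) : Dual 𝔽₂ (Fin 4 → 𝔽₂) := LinearMap.proj i
  -- The summands `β₁ • x 2 + β₂ • x 3` absorb the products of `x 0` with `x 2` and `x 3`.
  let L : (Fin 4 → 𝔽₂) →ₗ[𝔽₂] 𝔽₂ × (Fin 2 → 𝔽₂) × 𝔽₂ :=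
    (x 1 + β₁ • x 2 + β₂ • x 3).prod ((LinearMap.pi ![x 2, x 3]).prod (x 0))
  have hL (z) : L z = (z 1 + β₁ * z 2 + β₂ * z 3, ![z 2, z 3], z 0) := by
    ext i <;> [rfl; fin_cases i <;> rfl; rfl]
  have hinj : Function.Injective L := by
    rw [injective_iff_map_eq_zero]
    intro z hz
    have h₂ : z 2 = 0 := congrFun (congrArg (·.2.1) hz) 0
    have h₃ : z 3 = 0 := congrFun (congrArg (·.2.1) hz) 1
    have h₁ : z 1 = 0 := by simpa [hL, h₂, h₃] using congrArg Prod.fst hz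
    ext i
    fin_cases i <;> [exact congrArg (·.2.2) hz; exact h₁; exact h₂; exact h₃]
  refine ⟨c, γ, LinearMap.linearEquivOfInjective L hinj (by simp) ≪≫ₗ e,
    α₀ • x 0 + α₁ • x 2 + α₂ • x 3 + κ • (x 1 + β₁ • x 2 + β₂ • x 3), d, fun z => ?_⟩
  rw [LinearEquiv.trans_apply, LinearMap.linearEquivOfInjective_apply, hL, hfe, hexp]
  simp only [normalForm, LinearMap.add_apply, LinearMap.smul_apply, smul_eq_mul,
    LinearMap.proj_apply, x]
  grind

end NormalForm

section Classification

variable {W W' W'' : Type*} [AddCommGroup W] [Module 𝔽₂ W] [AddCommGroup W'] [Module 𝔽₂ W']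
  [AddCommGroup W''] [Module 𝔽₂ W''] {f : W → 𝔽₂} {g : W' → 𝔽₂} {h : W'' → 𝔽₂}

theorem ExtendedAffineEquiv.trans (hfg : ExtendedAffineEquiv f g) (hgh : ExtendedAffineEquiv g h) :
    ExtendedAffineEquiv f h := by
  obtain ⟨e, a, ℓ, c, hfg⟩ := hfg
  obtain ⟨e', a', ℓ', c', hgh⟩ := hgh
  refine ⟨e' ≪≫ₗ e, e a' + a, ℓ ∘ₗ e' + ℓ', ℓ a' + c + c', fun x => ?_⟩
  simp only [hgh, hfg, map_add, LinearEquiv.trans_apply, LinearMap.add_apply, LinearMap.comp_apply,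
    LinearEquiv.coe_coe, add_assoc]
  ring

theorem NoLinearStructure.of_extendedAffineEquiv (hf : NoLinearStructure f)
    (hfg : ExtendedAffineEquiv f g) : NoLinearStructure g := by
  obtain ⟨e, a, ℓ, c, hg⟩ := hfg
  intro u hu b
  obtain ⟨x, hx⟩ := hf (e u) (by simpa) (b + ℓ u)
  refine ⟨e.symm (x + a), ?_⟩
  have add_self := ZModModule.add_self a
  simp only [hg, map_add, add_assoc, add_comm a, LinearEquiv.apply_symm_apply] at hx ⊢
  grind

theorem not_noLinearStructure_normalForm_zero_zero : ¬ NoLinearStructure (normalForm 0 0) := by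
  intro h
  obtain ⟨x, hx⟩ := h (Pi.single 2 1) (by simp) 1
  simp [normalForm, CharTwo.add_self_eq_zero] at hx

theorem extendedAffineEquiv_normalForm_one (γ : 𝔽₂) :
    ExtendedAffineEquiv (normalForm 1 γ) (normalForm 1 0) := by
  refine ⟨.refl 𝔽₂ _, Pi.single 0 γ, γ • LinearMap.proj 1, 0, fun x => ?_⟩
  simp only [normalForm, one_mul, zero_mul, add_zero, LinearEquiv.refl_apply, Pi.add_apply,
    Pi.single_eq_same, ne_eq, Pi.single_eq_of_ne, Fin.reduceEq, not_false_eq_true, one_ne_zero,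
    LinearMap.smul_apply, LinearMap.proj_apply, smul_eq_mul]
  grind

variable [Fintype W]

theorem NoLinearStructure.extendedAffineEquiv_normalForm (hf : NoLinearStructure f)
    (hW : finrank 𝔽₂ W = 4) (hsum : ∑ x, f x = 0) :
    ExtendedAffineEquiv f (normalForm 0 1) ∨ ExtendedAffineEquiv f (normalForm 1 0) := by
  obtain ⟨a, ha, haf⟩ : ∃ a ≠ 0, supportSum f ∈ Submodule.span 𝔽₂ {a} := by
    by_cases h : supportSum f = 0
    · have := nontrivial_of_finrank_pos (R := 𝔽₂) (M := W) (by omega)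
      obtain ⟨a, ha⟩ := exists_ne (0 : W)
      exact ⟨a, ha, h ▸ zero_mem _⟩
    · exact ⟨_, h, Submodule.mem_span_singleton_self _⟩
  obtain ⟨φ, κ, hφ⟩ := exists_dual_of_supportSum_mem_span hW hsum haf
  have hφ0 : φ ≠ 0 := by
    rintro rfl
    obtain ⟨x, hx⟩ := hf a ha (κ + 1)
    simp only [hφ, LinearMap.zero_apply, add_zero] at hx
    grind
  obtain ⟨c, γ, e, ℓ, d, hform⟩ := exists_linearEquiv_normalForm hW ha hφ0 hφ
  have hequiv : ExtendedAffineEquiv f (normalForm c γ) :=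
    ⟨e, 0, ℓ, d, fun x => by rw [add_zero, hform]; grind⟩
  obtain rfl | rfl := zmod_two_eq_zero_or_one c
  · obtain rfl | rfl := zmod_two_eq_zero_or_one γ
    · exact absurd (hf.of_extendedAffineEquiv hequiv) not_noLinearStructure_normalForm_zero_zero
    · exact .inl hequiv
  · exact .inr (hequiv.trans (extendedAffineEquiv_normalForm_one γ))

theorem exists_affine_or_normalForm (hW : finrank 𝔽₂ W = 4) (hsum : ∑ x, f x = 0)
    (hsupp : supportSum f = 0) :
    (∃ (ℓ : Dual 𝔽₂ W) (d : 𝔽₂), ∀ x, f x = ℓ x + d) ∨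
      ∃ (γ : 𝔽₂) (e : (Fin 4 → 𝔽₂) ≃ₗ[𝔽₂] W) (ℓ : Dual 𝔽₂ (Fin 4 → 𝔽₂)) (d : 𝔽₂),
        ∀ x, f (e x) = normalForm 0 γ x + ℓ x + d := by
  by_cases hadd : ∀ u v, f (u + v) = f u + f v + f 0
  · obtain ⟨ℓ, hℓ⟩ := exists_dual_of_add_eq hadd
    exact .inl ⟨ℓ, f 0, hℓ⟩
  right
  push Not at hadd
  obtain ⟨u, a, hua⟩ := hadd
  obtain ⟨φ, κ, hφ⟩ := exists_dual_of_supportSum_mem_span (a := a) hW hsum (hsupp ▸ zero_mem _)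
  have ha : a ≠ 0 := by
    rintro rfl
    rw [add_zero, add_assoc, CharTwo.add_self_eq_zero, add_zero] at hua
    exact hua rfl
  have hφ0 : φ ≠ 0 := by
    rintro rfl
    have h₀ := hφ 0
    have h₁ := hφ u
    simp only [zero_add, LinearMap.zero_apply] at h₀ h₁
    grind
  obtain ⟨c, γ, e, ℓ, d, hform⟩ := exists_linearEquiv_normalForm hW ha hφ0 hφ
  obtain rfl : c = 0 := by
    -- On a three-dimensional space, only the cubic term has a nonzero sum.
    have hflat := sum_flat_eq_zero hW hsum (a := e (Pi.single 0 1)) (u := e (Pi.single 2 1))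
      (v := e (Pi.single 3 1)) (hsupp ▸ zero_mem _)
    rw [← map_zero e] at hflat
    simp only [hform, normalForm, Pi.zero_apply, Pi.add_apply, mul_zero, mul_one, add_zero,
      zero_add, ne_eq, Fin.reduceEq, not_false_eq_true, Pi.single_eq_of_ne, Pi.single_eq_same,
      ← map_add, one_ne_zero] at hflat
    grind
  exact ⟨γ, e, ℓ, d, hform⟩

/-- The Boolean function with support `{0}`. -/
def originIndicator [DecidableEq W] (x : W) : 𝔽₂ := if x = 0 then 1 else 0

theorem supportSum_comp_add_right (f : W → 𝔽₂) (a : W) :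
    supportSum (fun x => f (x + a)) = supportSum f + (∑ x, f x) • a := by
  rw [supportSum, supportSum, sum_smul, ← sum_add_distrib]
  refine Fintype.sum_equiv (Equiv.addRight a) _ _ fun x => ?_
  simp [← smul_add, add_assoc, ZModModule.add_self]

theorem extendedAffineEquiv_originIndicator_add (hW : finrank 𝔽₂ W = 4) (hsum : ∑ x, f x = 1) :
    ExtendedAffineEquiv f (originIndicator : (Fin 4 → 𝔽₂) → 𝔽₂) ∨
      ∃ γ, ExtendedAffineEquiv f (originIndicator + normalForm 0 γ) := by
  classical
  let g (x : W) : 𝔽₂ := f (x + supportSum f) + originIndicator x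
  have hfg (x) : f (x + supportSum f) = originIndicator x + g x := by grind
  have hg : ∑ x, g x = 0 := by
    have htranslate : ∑ x, f (x + supportSum f) = ∑ x, f x :=
      Fintype.sum_equiv (Equiv.addRight (supportSum f)) _ _ fun _ => rfl
    simp [g, sum_add_distrib, htranslate, hsum, originIndicator, CharTwo.add_self_eq_zero]
  have hgsupp : supportSum g = 0 := by
    calc supportSum g = supportSum (fun x => f (x + supportSum f)) := by
          simp [supportSum, g, add_smul, sum_add_distrib, originIndicator]
      _ = 0 := by rw [supportSum_comp_add_right, hsum, one_smul, ZModModule.add_self]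
  have hindicator (e : (Fin 4 → 𝔽₂) ≃ₗ[𝔽₂] W) (x) : originIndicator (e x) = originIndicator x := by
    simp [originIndicator]
  obtain ⟨ℓ, d, hℓ⟩ | ⟨γ, e, ℓ, d, hform⟩ := exists_affine_or_normalForm hW hg hgsupp
  · have e : (Fin 4 → 𝔽₂) ≃ₗ[𝔽₂] W := .ofFinrankEq _ _ (by simp [hW])
    refine .inl ⟨e, supportSum f, ℓ ∘ₗ e, d, fun x => ?_⟩
    rw [hfg, hindicator, hℓ, LinearMap.comp_apply, LinearEquiv.coe_coe]
    grind
  · refine .inr ⟨γ, e, supportSum f, ℓ, d, fun x => ?_⟩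
    rw [hfg, hindicator, hform, Pi.add_apply]
    grind

end Classification

section Representatives

/-- Representatives of the extended affine classes of the functions on `𝔽₂⁴` without linear
structures. -/
def representative : Fin 5 → (Fin 4 → 𝔽₂) → 𝔽₂ :=
  ![normalForm 0 1, normalForm 1 0, originIndicator, originIndicator + normalForm 0 0,
    originIndicator + normalForm 0 1]

theorem noLinearStructure_representative (i : Fin 5) : NoLinearStructure (representative i) := by
  revert i
  unfold NoLinearStructure
  decide +kernel

theorem NoLinearStructure.exists_extendedAffineEquiv_representative {W : Type*} [AddCommGroup W]
    [Module 𝔽₂ W] [Finite W] {f : W → 𝔽₂} (hf : NoLinearStructure f) (hW : finrank 𝔽₂ W = 4) :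
    ∃ i, ExtendedAffineEquiv f (representative i) := by
  have := Fintype.ofFinite W
  obtain hsum | hsum := zmod_two_eq_zero_or_one (∑ x, f x)
  · obtain h | h := hf.extendedAffineEquiv_normalForm hW hsum
    exacts [⟨0, h⟩, ⟨1, h⟩]
  · obtain h | ⟨γ, h⟩ := extendedAffineEquiv_originIndicator_add hW hsum
    · exact ⟨2, h⟩
    · obtain rfl | rfl := zmod_two_eq_zero_or_one γ
      exacts [⟨3, h⟩, ⟨4, h⟩]

end Representatives

section SectionSizes

/-- The largest number of points of a finite set `S` on a hyperplane, a linear invariant that tells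
the five caps apart. -/
noncomputable def maxSectionCard {V : Type*} [AddCommGroup V] [Module 𝔽₂ V] (S : Set V) : ℕ :=
  ⨆ ψ : {ψ : Dual 𝔽₂ V // ψ ≠ 0}, {x ∈ S | ψ.1 x = 0}.ncard

theorem maxSectionCard_image {V V' : Type*} [AddCommGroup V] [Module 𝔽₂ V] [AddCommGroup V']
    [Module 𝔽₂ V'] (e : V ≃ₗ[𝔽₂] V') (S : Set V) : maxSectionCard (e '' S) = maxSectionCard S := by
  refine (e.dualMap.toEquiv.subtypeEquiv fun ψ => by simp).iSup_congr fun ψ => ?_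
  rw [← Set.ncard_image_of_injective _ e.injective]
  congr 1
  ext y
  obtain ⟨x, rfl⟩ := e.surjective y
  simp [e.injective.mem_set_image]

theorem ncard_graphCap_section {W : Type*} [AddCommGroup W] [Module 𝔽₂ W] [Fintype W]
    (f : W → 𝔽₂) (ψ : Dual 𝔽₂ (𝔽₂ × W × 𝔽₂)) :
    {p ∈ graphCap f | ψ p = 0}.ncard =
      #{x | ψ (f x, x, 1) = 0} + if ψ (1, 0, 0) = 0 then 1 else 0 := by
  have hinj : Function.Injective fun x => (f x, x, (1 : 𝔽₂)) := fun x y h => by simp_all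
  let A : Finset W := {x | ψ (f x, x, 1) = 0}
  have hA : ((fun x => (f x, x, (1 : 𝔽₂))) '' A).ncard = #A := by
    rw [Set.ncard_image_of_injective _ hinj, Set.ncard_coe_finset]
  split_ifs with h
  · rw [← hA, ← Set.ncard_insert_of_notMem (a := (1, 0, 0)) (by simp) (Set.toFinite _)]
    congr 1
    ext p
    simp only [graphCap, A]
    aesop
  · rw [add_zero, ← hA]
    congr 1
    ext p
    simp only [graphCap, A]
    aesop

theorem maxSectionCard_graphCap {κ : Type*} [Fintype κ] [DecidableEq κ] (f : (κ → 𝔽₂) → 𝔽₂) :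
    maxSectionCard (graphCap f) = univ.sup fun p : {p : 𝔽₂ × (κ → 𝔽₂) × 𝔽₂ // p ≠ 0} =>
      #{x | p.1.1 * f x + p.1.2.1 ⬝ᵥ x + p.1.2.2 = 0} + if p.1.1 = 0 then 1 else 0 := by
  let scalar := (LinearMap.ringLmapEquivSelf 𝔽₂ 𝔽₂ 𝔽₂).symm
  let functional : (𝔽₂ × (κ → 𝔽₂) × 𝔽₂) ≃ₗ[𝔽₂] Dual 𝔽₂ (𝔽₂ × (κ → 𝔽₂) × 𝔽₂) :=
    scalar.prodCongr (((dotProductEquiv 𝔽₂ κ).prodCongr scalar) ≪≫ₗ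
      dualProdDualEquivDual 𝔽₂ _ _) ≪≫ₗ dualProdDualEquivDual 𝔽₂ _ _
  have happly (γ u α y x s) : functional (γ, u, α) (y, x, s) = γ * y + u ⬝ᵥ x + α * s := by
    simp [functional, scalar, mul_comm, add_assoc]
  rw [sup_univ_eq_ciSup]
  refine ((functional.toEquiv.subtypeEquiv fun p => by simp).iSup_congr ?_).symm
  rintro ⟨⟨γ, u, α⟩, hp⟩
  exact (ncard_graphCap_section f _).trans (by simp [happly])

theorem maxSectionCard_representative (i : Fin 5) :
    maxSectionCard (graphCap (representative i)) = ![10, 12, 15, 13, 11] i := by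
  rw [maxSectionCard_graphCap]
  revert i
  decide +kernel

end SectionSizes

section CompleteCaps

theorem completeCap_image_graphCap {n : ℕ} {W : Type*} [AddCommGroup W] [Module 𝔽₂ W] {f : W → 𝔽₂}
    (hf : NoLinearStructure f) (e : (𝔽₂ × W × 𝔽₂) ≃ₗ[𝔽₂] (Fin n → 𝔽₂)) :
    CompleteCap (e '' graphCap f) :=
  (completeCap_iff_completeSumFree ((Set.insert_nonempty _ _).image e)).2
    ((completeSumFree_graphCap_iff.2 hf).image e.toAddEquiv)

theorem ProjEquiv.maxSectionCard_eq {n : ℕ} {S T : Set (Fin n → 𝔽₂)} (h : ProjEquiv S T) :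
    maxSectionCard S = maxSectionCard T := by
  obtain ⟨e, rfl⟩ := projEquiv_iff_exists_linearEquiv.1 h
  exact (maxSectionCard_image e S).symm

theorem CompleteSumFree.exists_linearEquiv_image_graphCap_representative {V : Type*}
    [AddCommGroup V] [Module 𝔽₂ V] [Finite V] (hV : finrank 𝔽₂ V = 6)
    {S : Set V} (hS : CompleteSumFree S) (hcard : S.ncard = 17) :
    ∃ (i : Fin 5) (e : (𝔽₂ × (Fin 4 → 𝔽₂) × 𝔽₂) ≃ₗ[𝔽₂] V),
      e '' graphCap (representative i) = S := by
  classical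
  have := Fintype.ofFinite V
  obtain ⟨S, rfl⟩ := S.toFinite.exists_finset_coe
  rw [Set.ncard_coe_finset] at hcard
  obtain ⟨φ, hφ, hsection⟩ := exists_card_section_eq_one hV hS hcard
  obtain ⟨a, ha⟩ := card_eq_one.1 hsection
  obtain ⟨f, e, he⟩ := hS.exists_linearEquiv_image_graphCap hφ (a := a) (κ := Fin 4)
    (by simpa using Finset.ext_iff.1 ha) (by simpa using hV)
  have hf : NoLinearStructure f := by
    rw [← completeSumFree_graphCap_iff, ← Set.preimage_image_eq (graphCap f) e.injective, he,
      ← LinearEquiv.image_symm_eq_preimage]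
    exact hS.image e.symm.toAddEquiv
  obtain ⟨i, hi⟩ := hf.exists_extendedAffineEquiv_representative (by simp)
  obtain ⟨E, hE⟩ := hi.exists_linearEquiv_image_graphCap
  refine ⟨i, E ≪≫ₗ e, ?_⟩
  rw [← he, ← hE, Set.image_image]
  rfl

end CompleteCaps

/-- Up to projective equivalence there are exactly five complete caps of size 17 in
PG(5,2) (the conjecture of Davydov and Tombak). -/
theorem completeCap_PG5_size17_five_orbits :
    ∃ A : Fin 5 → Set (Fin 6 → ZMod 2),
      (∀ i, CompleteCap (A i) ∧ (A i).ncard = 17) ∧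
      (∀ i j, i ≠ j → ¬ ProjEquiv (A i) (A j)) ∧
      (∀ S : Set (Fin 6 → ZMod 2), CompleteCap S → S.ncard = 17 →
        ∃ i, ProjEquiv S (A i)) := by
  let Φ : (𝔽₂ × (Fin 4 → 𝔽₂) × 𝔽₂) ≃ₗ[𝔽₂] (Fin 6 → 𝔽₂) := .ofFinrankEq _ _ (by simp)
  refine ⟨fun i => Φ '' graphCap (representative i), fun i => ⟨?_, ?_⟩, fun i j hij h => ?_,
    fun S hS hcard => ?_⟩
  · exact completeCap_image_graphCap (noLinearStructure_representative i) Φ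
  · rw [Set.ncard_image_of_injective _ Φ.injective, ncard_graphCap, Nat.card_eq_fintype_card]
    rfl
  · have hmax := h.maxSectionCard_eq
    simp only [maxSectionCard_image, maxSectionCard_representative] at hmax
    exact hij ((by decide : Function.Injective ![10, 12, 15, 13, 11]) hmax)
  · have hne : S.Nonempty := Set.nonempty_of_ncard_ne_zero (by omega)
    obtain ⟨i, e, rfl⟩ := ((completeCap_iff_completeSumFree hne).1
      hS).exists_linearEquiv_image_graphCap_representative (by simp) hcard
    exact ⟨i, projEquiv_iff_exists_linearEquiv.2 ⟨e.symm ≪≫ₗ Φ, by simp [Set.image_image]⟩⟩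
end

section
/- The smallest size of a minimal 1-saturating set in PG(6,2) is 19: there exists a 1-saturating set of 19 nonzero vectors in (ZMod 2)^7, every 1-saturating set of nonzero vectors of (ZMod 2)^7 has at least 19 points, and no 1-saturating 19-set in (ZMod 2)^7 is a cap. -/
/-!
Adjoining `0` to a 1-saturating set `S` gives a set `A` with `A + A = V`, so the claim is that
`A + A = V` forces `#A ≥ 20` when `V = 𝔽₂⁷`, and that `A \ {0}` is not a cap when `#A = 20`.

For a nonzero functional `f`, write `T` and `Y` for the slices of `A` on which `f` equals `0` and
`1`. Moved into the hyperplane `f = 0`, they satisfy `T + Y = ker f`: a covering of a space of 64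
vectors by `#T` translates of `Y`. Slicing further, along the span of `T`, shows that
`#Y ≥ 64 / 4` if `#T ≤ 5` and `#Y ≥ 64 * 7 / 32` if `#T = 6`, so neither slice is small.
Hence the character sums `Â f = ∑ a ∈ A, (-1) ^ f a` lie in a short interval, while `f (∑ A)`
fixes them modulo `4`. Summing over all `f` a polynomial in `Â f` and `(-1) ^ f (∑ A)` that has a
sign on the admissible values, and comparing with the moments of `Â`, excludes `#A ≤ 19`.

If `A \ {0}` is a cap with 19 points, every nonzero `s ∈ A` has exactly two representations in
`A + A`, which also gives the third moment of `Â`. A cubic polynomial then determines the spectrum: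
exactly eight functionals have `Â f = 6`. But that set of functionals is stable under
translation by a space of at least 32 functionals.

For existence, take five vectors `uᵢ` of `𝔽₂³` whose pairwise sums exhaust the nonzero vectors and
the five lines `Lᵢ` of a spread of `𝔽₄²`, and let `A` be the union of the `{uᵢ} × Lᵢ`: any two of
the lines are complementary, and together the lines cover the plane.
-/

namespace OneSaturating

open Finset Module ZModModule
open scoped Pointwise

section Covers

variable {G : Type*} [AddCommGroup G] {T Y : Finset G}

/-- `SumCovers T Y` says that the sumset `T + Y` is the whole group: the translates of `Y` by the
elements of `T` cover it. A saturating set together with `0` covers with itself. -/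
def SumCovers (T Y : Finset G) : Prop := ∀ v, ∃ t ∈ T, ∃ y ∈ Y, t + y = v

namespace SumCovers

lemma symm (h : SumCovers T Y) : SumCovers Y T := fun v ↦
  let ⟨t, ht, y, hy, e⟩ := h v
  ⟨y, hy, t, ht, by rw [add_comm, e]⟩

lemma mono {T' Y' : Finset G} (h : SumCovers T Y) (hT : T ⊆ T') (hY : Y ⊆ Y') :
    SumCovers T' Y' := fun v ↦
  let ⟨t, ht, y, hy, e⟩ := h v
  ⟨t, hT ht, y, hY hy, e⟩

lemma vadd_left [DecidableEq G] (h : SumCovers T Y) (a : G) : SumCovers (a +ᵥ T) Y := fun v ↦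
  let ⟨t, ht, y, hy, e⟩ := h (v - a)
  ⟨a +ᵥ t, vadd_mem_vadd_finset ht, y, hy, by rw [vadd_eq_add, add_assoc, e, add_sub_cancel]⟩

lemma vadd_right [DecidableEq G] (h : SumCovers T Y) (a : G) : SumCovers T (a +ᵥ Y) :=
  (h.symm.vadd_left a).symm

lemma exists_zero_mem_left (h : SumCovers T Y) :
    ∃ T' : Finset G, 0 ∈ T' ∧ #T' = #T ∧ SumCovers T' Y := by
  classical
  obtain ⟨a, ha, -⟩ := h 0
  exact ⟨-a +ᵥ T, by simpa using vadd_mem_vadd_finset (a := -a) ha, card_vadd_finset ..,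
    h.vadd_left (-a)⟩

lemma natCard_le (h : SumCovers T Y) : Nat.card G ≤ #T * #Y := by
  classical
  have hsurj : Function.Surjective fun p : (T ×ˢ Y : Finset (G × G)) ↦ p.1.1 + p.1.2 := fun v ↦
    let ⟨t, ht, y, hy, e⟩ := h v
    ⟨⟨(t, y), mk_mem_product ht hy⟩, e⟩
  simpa only [Nat.card_eq_card_toFinset, Nat.card_eq_fintype_card, Fintype.card_coe, card_product]
    using Nat.card_le_card_of_surjective _ hsurj

lemma one_lt_card_left (h : SumCovers T Y) (h0 : 0 ∉ Y) : 1 < #T := by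
  obtain ⟨t, ht, -⟩ := h 0
  obtain ⟨t', ht', y, hy, e⟩ := h t
  refine one_lt_card.mpr ⟨t, ht, t', ht', fun htt ↦ h0 ?_⟩
  rwa [← add_eq_left.mp (e.trans htt)]

end SumCovers

end Covers

section CosetSlices

variable {R V : Type*} [Ring R] [AddCommGroup V] [Module R V]

/-- The slice of `Y` in the coset `L + g`, translated back into `L`. -/
noncomputable def cosetSlice (L : Submodule R V) (Y : Finset V) (g : V) : Finset L :=
  Y.preimage (fun x : L ↦ (x : V) + g) fun _ _ _ _ h ↦ Subtype.ext (add_right_cancel h)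

variable {L : Submodule R V} {T Y : Finset V} {g : V}

@[simp] lemma mem_cosetSlice {x : L} : x ∈ cosetSlice L Y g ↔ (x : V) + g ∈ Y :=
  mem_preimage

lemma coe_cosetSlice_zero : (cosetSlice L Y 0 : Set L) = (↑) ⁻¹' (Y : Set V) := by
  ext x; simp

lemma card_cosetSlice (L : Submodule R V) (Y : Finset V) (g : V)
    [DecidablePred fun y ↦ y - g ∈ L] :
    #(cosetSlice L Y g) = #{y ∈ Y | y - g ∈ L} := by
  refine card_bij (fun x _ ↦ (x : V) + g) ?_ ?_ ?_
  · intro x hx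
    simpa using hx
  · intro x _ y _ h
    exact Subtype.ext (add_right_cancel h)
  · intro y hy
    rw [mem_filter] at hy
    exact ⟨⟨y - g, hy.2⟩, by simpa using hy.1, sub_add_cancel y g⟩

lemma card_cosetSlice_zero (hT : (T : Set V) ⊆ L) : #(cosetSlice L T 0) = #T := by
  classical
  rw [card_cosetSlice, filter_true_of_mem fun t ht ↦ by simpa using hT ht]

lemma sum_card_cosetSlice [Fintype V] (L : Submodule R V) (Y : Finset V) :
    ∑ g, #(cosetSlice L Y g) = Nat.card L * #Y := by
  classical
  have hfiber (y : V) : #{g : V | y - g ∈ L} = Nat.card L := by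
    rw [← Fintype.card_subtype, ← Nat.card_eq_fintype_card]
    exact Nat.card_congr ((Equiv.subLeft y).subtypeEquiv fun g ↦ Iff.rfl)
  simp only [card_cosetSlice, card_filter]
  rw [sum_comm]
  simp only [← card_filter, hfiber, sum_const, smul_eq_mul, mul_comm]

lemma mul_natCard_le_of_forall_cosetSlice [Finite V] (L : Submodule R V) {p q : ℕ}
    (h : ∀ g, p * Nat.card L ≤ q * #(cosetSlice L Y g)) : p * Nat.card V ≤ q * #Y := by
  have := Fintype.ofFinite V
  refine Nat.le_of_mul_le_mul_left ?_ (Nat.card_pos (α := L))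
  calc Nat.card L * (p * Nat.card V) = ∑ _g : V, p * Nat.card L := by
        rw [sum_const, card_univ, Nat.card_eq_fintype_card (α := V), smul_eq_mul]; ring
    _ ≤ ∑ g, q * #(cosetSlice L Y g) := sum_le_sum fun g _ ↦ h g
    _ = Nat.card L * (q * #Y) := by rw [← mul_sum, sum_card_cosetSlice]; ring

lemma SumCovers.restrict (h : SumCovers T Y) (hT : (T : Set V) ⊆ L) (g : V) :
    SumCovers (cosetSlice L T 0) (cosetSlice L Y g) := by
  intro x
  obtain ⟨t, ht, y, hy, e⟩ := h (x + g)
  have hyg : y - g = x - t := by rw [← add_sub_cancel_left t y, e]; abel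
  refine ⟨⟨t, hT ht⟩, by simpa, ⟨y - g, hyg ▸ L.sub_mem x.2 (hT ht)⟩, by simpa, ?_⟩
  exact Subtype.ext (by simp [hyg])

lemma two_mul_natCard_le_of_sumCovers [Finite V] (h : SumCovers T Y) (hY : (Y : Set V) ⊆ L)
    (h0 : 0 ∉ Y) : 2 * Nat.card V ≤ Nat.card L * #T := by
  refine mul_natCard_le_of_forall_cosetSlice L fun g ↦ ?_
  have hslice : 1 < #(cosetSlice L T g) :=
    (h.symm.restrict hY g).symm.one_lt_card_left (by simpa using h0)
  rw [mul_comm]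
  exact Nat.mul_le_mul_left _ hslice

end CosetSlices

section Binary

variable {V : Type*} [AddCommGroup V] [Module (ZMod 2) V] {T Y : Finset V}

lemma finrank_span_le_card_sub_one (h0 : (0 : V) ∈ T) :
    finrank (ZMod 2) (Submodule.span (ZMod 2) (T : Set V)) ≤ #T - 1 := by
  classical
  rw [← card_erase_of_mem h0, ← Submodule.span_sdiff_singleton_zero (R := ZMod 2), ← coe_erase]
  exact finrank_span_finset_le_card _

lemma add_eq_zero_iff_eq {x y : V} : x + y = 0 ↔ x = y := by
  rw [← sub_eq_add, sub_eq_zero]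

lemma natCard_eq_two_pow_finrank (V : Type*) [AddCommGroup V] [Module (ZMod 2) V] [Finite V] :
    Nat.card V = 2 ^ finrank (ZMod 2) V := by
  rw [natCard_eq_pow_finrank (K := ZMod 2) (V := V), Nat.card_zmod]

/-- Translating a triple by the sum of its elements moves it into the nonzero elements of a
plane, and each coset of that plane meets `T` at least twice. -/
lemma natCard_le_two_mul_of_card_right_eq_three [Finite V] (h : SumCovers T Y) (hY : #Y = 3) :
    Nat.card V ≤ 2 * #T := by
  classical
  obtain ⟨a, b, c, hab, hac, hbc, rfl⟩ := card_eq_three.mp hY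
  let P := Submodule.span (ZMod 2) (({a + b, a + c} : Finset V) : Set V)
  have hab_mem : a + b ∈ P := Submodule.subset_span (by simp)
  have hac_mem : a + c ∈ P := Submodule.subset_span (by simp)
  have hP : Nat.card P ≤ 4 := by
    rw [natCard_eq_two_pow_finrank]
    exact Nat.pow_le_pow_right two_pos ((finrank_span_finset_le_card _).trans card_le_two)
  have htranslate : (a + b + c) +ᵥ ({a, b, c} : Finset V) = {b + c, a + c, a + b} := by
    simp only [vadd_finset_insert, vadd_finset_singleton, vadd_eq_add]
    rw [show a + b + c + a = b + c by grind [add_self a],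
      show a + b + c + b = a + c by grind [add_self b],
      show a + b + c + c = a + b by grind [add_self c]]
  have hcover := h.vadd_right (a + b + c)
  rw [htranslate] at hcover
  have hsub : (({b + c, a + c, a + b} : Finset V) : Set V) ⊆ P := by
    have hbc_mem : b + c ∈ P := by
      convert P.add_mem hab_mem hac_mem using 1
      grind [add_self a]
    simp [Set.insert_subset_iff, hab_mem, hac_mem, hbc_mem]
  have hne : 0 ∉ ({b + c, a + c, a + b} : Finset V) := by
    simp [eq_comm (a := (0 : V)), add_eq_zero_iff_eq, hab, hac, hbc]
  have h2 := two_mul_natCard_le_of_sumCovers hcover hsub hne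
  nlinarith

end Binary

section Characters

variable {V : Type*} [AddCommGroup V] [Module (ZMod 2) V]

/-- The character `x ↦ (-1) ^ f x` attached to a linear functional `f`; every character of a binary
space has this form. -/
noncomputable def signChar (f : Dual (ZMod 2) V) : AddChar V ℤ :=
  (AddChar.zmodChar 2 (ζ := (-1 : ℤ)) (by norm_num)).compAddMonoidHom f.toAddMonoidHom

lemma signChar_apply (f : Dual (ZMod 2) V) (x : V) : signChar f x = (-1) ^ (f x).val := rfl

variable {f g : Dual (ZMod 2) V} {x : V}

lemma ne_zero_iff_eq_one {c : ZMod 2} : c ≠ 0 ↔ c = 1 := by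
  revert c
  decide

lemma signChar_of_eq_zero (h : f x = 0) : signChar f x = 1 := by simp [signChar_apply, h]

lemma signChar_of_eq_one (h : f x = 1) : signChar f x = -1 := by
  simp [signChar_apply, h, ZMod.val_one]

lemma signChar_eq_one_iff : signChar f x = 1 ↔ f x = 0 := by
  refine ⟨fun h ↦ ?_, signChar_of_eq_zero⟩
  by_contra hx
  rw [signChar_of_eq_one (ne_zero_iff_eq_one.mp hx)] at h
  norm_num at h

@[simp] lemma signChar_zero_left (x : V) : signChar (0 : Dual (ZMod 2) V) x = 1 :=
  signChar_of_eq_zero rfl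

lemma signChar_add_left (f g : Dual (ZMod 2) V) (x : V) :
    signChar (f + g) x = signChar f x * signChar g x :=
  AddChar.map_add_eq_mul (AddChar.zmodChar 2 (ζ := (-1 : ℤ)) (by norm_num)) (f x) (g x)

lemma sum_signChar [Fintype V] (hf : f ≠ 0) : ∑ x, signChar f x = 0 := by
  refine AddChar.sum_eq_zero_iff_ne_zero.mpr fun h ↦ hf (LinearMap.ext fun x ↦ ?_)
  rw [LinearMap.zero_apply, ← signChar_eq_one_iff, h, AddChar.zero_apply]

lemma natCard_dual [Finite V] : Nat.card (Dual (ZMod 2) V) = Nat.card V := by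
  have := finite_of_finite (ZMod 2) (M := Dual (ZMod 2) V)
  rw [natCard_eq_two_pow_finrank, natCard_eq_two_pow_finrank V, Subspace.dual_finrank_eq]

lemma sum_dual_signChar [Finite V] [Fintype (Dual (ZMod 2) V)] [DecidableEq V] (x : V) :
    ∑ f : Dual (ZMod 2) V, signChar f x = if x = 0 then (Nat.card V : ℤ) else 0 := by
  split_ifs with hx
  · simp [hx, ← natCard_dual (V := V), Nat.card_eq_fintype_card]
  · rw [← forall_dual_apply_eq_zero_iff (ZMod 2)] at hx
    obtain ⟨f, hf⟩ := not_forall.mp hx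
    refine (sum_congr rfl fun g _ ↦ ?_).trans
      (sum_signChar (f := Dual.eval (ZMod 2) V x) fun h ↦ hf (DFunLike.congr_fun h f))
    rfl

end Characters

section Transform

variable {V : Type*} [AddCommGroup V] [Module (ZMod 2) V]

/-- The Walsh transform of the indicator function of `A`. -/
noncomputable def charSum (A : Finset V) (f : Dual (ZMod 2) V) : ℤ := ∑ a ∈ A, signChar f a

/-- The Walsh transform, that is, the Fourier transform over `𝔽₂`, of an integer-valued weight. -/
noncomputable def walsh [Fintype V] (w : V → ℤ) (f : Dual (ZMod 2) V) : ℤ :=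
  ∑ x, w x * signChar f x

variable {f : Dual (ZMod 2) V} {A : Finset V}

@[simp] lemma charSum_zero (A : Finset V) : charSum A 0 = #A := by simp [charSum]

lemma walsh_indicator [Fintype V] [DecidableEq V] (A : Finset V) (f : Dual (ZMod 2) V) :
    walsh (fun x ↦ if x ∈ A then 1 else 0) f = charSum A f := by
  simp [walsh, charSum]

lemma charSum_eq_card_sub (A : Finset V) (f : Dual (ZMod 2) V) :
    charSum A f = #A - 2 * #{a ∈ A | f a = 1} := by
  have hterm (a : V) : signChar f a = 1 - 2 * if f a = 1 then 1 else 0 := by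
    split_ifs with h
    · rw [signChar_of_eq_one h]; norm_num
    · rw [signChar_of_eq_zero (not_not.mp (mt ne_zero_iff_eq_one.mp h))]; norm_num
  simp only [charSum, hterm, sum_sub_distrib, ← mul_sum, sum_boole, sum_const, nsmul_one]

lemma natCast_card_filter_eq_one (A : Finset V) (f : Dual (ZMod 2) V) :
    (#{a ∈ A | f a = 1} : ZMod 2) = f (∑ a ∈ A, a) := by
  rw [map_sum, ← sum_boole]
  refine sum_congr rfl fun a _ ↦ ?_
  split_ifs with h
  · exact h.symm
  · exact (not_not.mp (mt ne_zero_iff_eq_one.mp h)).symm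

lemma charSum_modEq_of_apply_sum_eq_zero (h : f (∑ a ∈ A, a) = 0) : charSum A f ≡ #A [ZMOD 4] := by
  rw [← natCast_card_filter_eq_one, ZMod.natCast_eq_zero_iff] at h
  rw [charSum_eq_card_sub, Int.modEq_iff_dvd]
  omega

lemma charSum_modEq_of_apply_sum_eq_one (h : f (∑ a ∈ A, a) = 1) :
    charSum A f ≡ #A - 2 [ZMOD 4] := by
  rw [← natCast_card_filter_eq_one, ZMod.natCast_eq_one_iff_odd] at h
  obtain ⟨k, hk⟩ := h
  rw [charSum_eq_card_sub, Int.modEq_iff_dvd]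
  omega

lemma charSum_mul_charSum [Fintype V] [DecidableEq V] (A B : Finset V) (f : Dual (ZMod 2) V) :
    charSum A f * charSum B f = walsh (fun x ↦ A.addConvolution B x) f := by
  simp only [walsh, addConvolution, card_filter, Nat.cast_sum, sum_mul, Nat.cast_ite,
    Nat.cast_one, Nat.cast_zero]
  rw [sum_comm, charSum, charSum, sum_mul_sum, sum_product]
  simp [AddChar.map_add_eq_mul]

variable [Fintype (Dual (ZMod 2) V)]

lemma sum_walsh_mul_signChar [Fintype V] (w : V → ℤ) (x : V) :
    ∑ f, walsh w f * signChar f x = Nat.card V * w x := by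
  classical
  simp only [walsh, sum_mul, mul_assoc, ← AddChar.map_add_eq_mul]
  rw [sum_comm]
  simp [← mul_sum, sum_dual_signChar, add_eq_zero_iff_eq, mul_comm]

lemma sum_walsh_mul_walsh [Fintype V] (w v : V → ℤ) :
    ∑ f, walsh w f * walsh v f = Nat.card V * ∑ x, w x * v x := by
  conv_lhs =>
    enter [2, f]
    rw [walsh.eq_1 v, mul_sum]
  rw [sum_comm, mul_sum]
  refine sum_congr rfl fun x _ ↦ ?_
  calc ∑ f, walsh w f * (v x * signChar f x) = v x * ∑ f, walsh w f * signChar f x := by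
        rw [mul_sum]; exact sum_congr rfl fun f _ ↦ by ring
    _ = Nat.card V * (w x * v x) := by rw [sum_walsh_mul_signChar]; ring

variable [DecidableEq V]

lemma sum_charSum_mul_signChar [Finite V] (A : Finset V) (x : V) :
    ∑ f, charSum A f * signChar f x = if x ∈ A then (Nat.card V : ℤ) else 0 := by
  have := Fintype.ofFinite V
  simp only [← walsh_indicator, sum_walsh_mul_signChar, mul_ite, mul_one, mul_zero]

lemma sum_charSum_mul_charSum_mul_signChar [Finite V] (A B : Finset V) (x : V) :
    ∑ f, charSum A f * charSum B f * signChar f x = Nat.card V * A.addConvolution B x := by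
  have := Fintype.ofFinite V
  simp only [charSum_mul_charSum, sum_walsh_mul_signChar]

lemma sum_charSum_mul_charSum_mul_charSum [Finite V] (A B C : Finset V) :
    ∑ f, charSum A f * charSum B f * charSum C f =
      Nat.card V * ∑ c ∈ C, (A.addConvolution B c : ℤ) := by
  have := Fintype.ofFinite V
  simp only [charSum_mul_charSum]
  simp [← walsh_indicator, sum_walsh_mul_walsh]

lemma sum_charSum_mul_charSum_sq [Fintype V] (A B : Finset V) :
    ∑ f, (charSum A f * charSum B f) ^ 2 =
      Nat.card V * ∑ x, (A.addConvolution B x : ℤ) ^ 2 := by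
  simp only [charSum_mul_charSum, sq, sum_walsh_mul_walsh]

end Transform

section Multiplicities

variable {V : Type*} [AddCommGroup V] [DecidableEq V] {T Z : Finset V}

lemma sum_addConvolution [Fintype V] (T Z : Finset V) :
    ∑ x, T.addConvolution Z x = #T * #Z := by
  rw [← card_product]
  exact (card_eq_sum_card_fiberwise fun _ _ ↦ mem_coe.mpr (mem_univ _)).symm

lemma SumCovers.addConvolution_pos (h : SumCovers T Z) (x : V) : 0 < T.addConvolution Z x :=
  Finset.addConvolution_pos.mpr (mem_add.mpr (h x))

lemma SumCovers.sum_addConvolution_sub_one [Fintype V] (h : SumCovers T Z) :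
    ∑ x, (T.addConvolution Z x - 1) + Nat.card V = #T * #Z := by
  rw [← sum_addConvolution, Nat.card_eq_fintype_card, ← card_univ, card_eq_sum_ones,
    ← sum_add_distrib]
  exact sum_congr rfl fun x _ ↦ Nat.sub_add_cancel (h.addConvolution_pos x)

lemma one_lt_addConvolution {t t' x : V} (ht : t ∈ T) (ht' : t' ∈ T) (hz : x + t ∈ Z)
    (hz' : x + t' ∈ Z) (hne : t ≠ t') : 1 < T.addConvolution Z (x + t + t') :=
  one_lt_card.mpr ⟨(t, x + t'), by simp [ht, hz']; abel, (t', x + t), by simp [ht', hz]; abel,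
    fun e ↦ hne (congrArg Prod.fst e)⟩

variable [Module (ZMod 2) V]

lemma neg_finset_eq_self (T : Finset V) : -T = T := by
  ext x
  rw [mem_neg', ZModModule.neg_eq_self]

lemma addConvolution_self (T : Finset V) (x : V) : T.addConvolution T x = #{t ∈ T | x + t ∈ T} :=
  calc T.addConvolution T x = #(T ∩ (x +ᵥ T)) := by rw [card_inter_vadd, neg_finset_eq_self]
    _ = #{t ∈ T | x + t ∈ T} := by
      congr 1
      ext t
      rw [mem_inter, mem_filter, ← neg_vadd_mem_iff, ZModModule.neg_eq_self, vadd_eq_add]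

lemma addConvolution_self_zero (T : Finset V) : T.addConvolution T 0 = #T := by
  simp [addConvolution_self]

lemma even_addConvolution_self (T : Finset V) {x : V} (hx : x ≠ 0) :
    Even (T.addConvolution T x) := by
  rw [addConvolution_self, ← ZMod.natCast_eq_zero_iff_even, card_eq_sum_ones, Nat.cast_sum]
  refine sum_involution (fun t _ ↦ x + t) (fun _ _ ↦ by decide) (fun t _ _ h ↦ hx ?_) ?_ ?_
  · exact add_eq_right.mp h
  · intro t ht
    rw [mem_filter] at ht ⊢
    rw [← add_assoc, add_self, zero_add]
    exact ht.symm
  · intro t _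
    rw [← add_assoc, add_self, zero_add]

/-- Three representations `p = tᵢ + zᵢ` give three further points `p + tᵢ + tⱼ` represented
twice, and the total excess over one representation per point is then at least five. -/
lemma SumCovers.addConvolution_le_two [Finite V] (h : SumCovers T Z)
    (hcard : #T * #Z ≤ Nat.card V + 4) (p : V) : T.addConvolution Z p ≤ 2 := by
  have := Fintype.ofFinite V
  by_contra! hp
  obtain ⟨⟨t₁, z₁⟩, ⟨t₂, z₂⟩, ⟨t₃, z₃⟩, h₁, h₂, h₃, h₁₂, h₁₃, h₂₃⟩ := two_lt_card_iff.mp hp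
  simp only [mem_filter, mem_product] at h₁ h₂ h₃
  obtain ⟨⟨ht₁, hz₁⟩, e₁⟩ := h₁
  obtain ⟨⟨ht₂, hz₂⟩, e₂⟩ := h₂
  obtain ⟨⟨ht₃, hz₃⟩, e₃⟩ := h₃
  have hz_eq {t z : V} (e : t + z = p) : z = p + t := by rw [← e]; grind [add_self t]
  obtain rfl := hz_eq e₁
  obtain rfl := hz_eq e₂
  obtain rfl := hz_eq e₃
  have ht₁₂ : t₁ ≠ t₂ := by rintro rfl; exact h₁₂ rfl
  have ht₁₃ : t₁ ≠ t₃ := by rintro rfl; exact h₁₃ rfl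
  have ht₂₃ : t₂ ≠ t₃ := by rintro rfl; exact h₂₃ rfl
  have h12 := one_lt_addConvolution ht₁ ht₂ hz₁ hz₂ ht₁₂
  have h13 := one_lt_addConvolution ht₁ ht₃ hz₁ hz₃ ht₁₃
  have h23 := one_lt_addConvolution ht₂ ht₃ hz₂ hz₃ ht₂₃
  have hexcess := h.sum_addConvolution_sub_one
  have hfour : ∑ x ∈ {p, p + t₁ + t₂, p + t₁ + t₃, p + t₂ + t₃}, (T.addConvolution Z x - 1) ≤
      ∑ x, (T.addConvolution Z x - 1) := sum_le_sum_of_subset (subset_univ _)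
  rw [sum_insert, sum_insert, sum_insert, sum_singleton] at hfour
  · omega
  all_goals
    simp only [mem_insert, mem_singleton, add_assoc, add_right_inj, add_left_inj, left_eq_add,
      add_eq_zero_iff_eq]
    grind

lemma SumCovers.sum_addConvolution_sq [Fintype V] (h : SumCovers T Z)
    (hcard : #T * #Z ≤ Nat.card V + 4) :
    ∑ x, (T.addConvolution Z x : ℤ) ^ 2 = 3 * (#T * #Z) - 2 * Nat.card V := by
  have hpoint (x : V) : (T.addConvolution Z x : ℤ) ^ 2 = 3 * T.addConvolution Z x - 2 := by
    have h1 := h.addConvolution_pos x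
    have h2 := h.addConvolution_le_two hcard x
    interval_cases T.addConvolution Z x <;> norm_num
  simp only [hpoint, sum_sub_distrib, ← mul_sum, sum_const, card_univ, nsmul_eq_mul,
    Nat.card_eq_fintype_card]
  rw [← Nat.cast_sum, sum_addConvolution]
  push_cast
  ring

end Multiplicities

section SixSix

variable {V : Type*} [AddCommGroup V] [Module (ZMod 2) V] {T Z : Finset V}

lemma sum_charSum_mul_self [Finite V] [Fintype (Dual (ZMod 2) V)] (T : Finset V) :
    ∑ f, charSum T f * charSum T f = Nat.card V * #T := by
  classical
  have h := sum_charSum_mul_charSum_mul_signChar T T 0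
  simpa only [AddChar.map_zero_eq_one, mul_one, addConvolution_self_zero] using h

lemma four_le_charSum_sq {f : Dual (ZMod 2) V} (hZ : #Z % 4 = 2) (hf : f (∑ z ∈ Z, z) = 0) :
    4 ≤ charSum Z f ^ 2 := by
  have hmod := charSum_modEq_of_apply_sum_eq_zero hf
  rw [Int.modEq_iff_dvd] at hmod
  rcases (by omega : charSum Z f ≤ -2 ∨ 2 ≤ charSum Z f) with h | h <;> nlinarith

/-- The excess `36 - 32` forces `∑ (T̂ Ẑ)² = 32 * 44`, whereas `Ẑ` vanishes nowhere on the
hyperplane of functionals killing `∑ Z`, so that `T̂²` alone contributes more. -/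
theorem not_sumCovers_of_card_eq_six [Finite V] (hV : Nat.card V = 32) (hT : #T = 6) (hZ : #Z = 6) :
    ¬ SumCovers T Z := by
  classical
  intro h
  have := Fintype.ofFinite V
  have := finite_of_finite (ZMod 2) (M := Dual (ZMod 2) V)
  have := Fintype.ofFinite (Dual (ZMod 2) V)
  set σ := ∑ z ∈ Z, z
  have hsum : ∑ f, (charSum T f * charSum Z f) ^ 2 = 1408 := by
    rw [sum_charSum_mul_charSum_sq, h.sum_addConvolution_sq (by rw [hT, hZ, hV]), hT, hZ, hV]
    norm_num
  have hnonneg (f : Dual (ZMod 2) V) : 0 ≤ (charSum T f * charSum Z f) ^ 2 -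
      2 * (charSum T f * charSum T f + charSum T f * charSum T f * signChar f σ) := by
    by_cases hf : f σ = 0
    · rw [signChar_of_eq_zero hf]
      nlinarith [four_le_charSum_sq (by rw [hZ]) hf, sq_nonneg (charSum T f)]
    · rw [signChar_of_eq_one (ne_zero_iff_eq_one.mp hf)]
      nlinarith [sq_nonneg (charSum T f * charSum Z f)]
  have hzero := single_le_sum (fun f _ ↦ hnonneg f) (mem_univ 0)
  have hsumσ := sum_charSum_mul_charSum_mul_signChar T T σ
  rw [sum_sub_distrib, ← mul_sum, sum_add_distrib, hsum, sum_charSum_mul_self, hsumσ] at hzero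
  simp only [hT, hZ, hV, charSum_zero, signChar_zero_left] at hzero
  push_cast at hzero
  linarith [Int.natCast_nonneg (T.addConvolution T σ)]

end SixSix

section Hyperplanes

variable {V : Type*} [AddCommGroup V] [Module (ZMod 2) V] {f : Dual (ZMod 2) V}

lemma natCard_ker [Finite V] (hf : f ≠ 0) : 2 * Nat.card (LinearMap.ker f) = Nat.card V := by
  rw [natCard_eq_two_pow_finrank, natCard_eq_two_pow_finrank V,
    ← Dual.finrank_ker_add_one_of_ne_zero hf, pow_succ, mul_comm]

lemma two_mul_card_filter_eq [Fintype V] (hf : f ≠ 0) (c : ZMod 2) :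
    2 * #{x | f x = c} = Nat.card V := by
  have hone : 2 * #{x | f x = 1} = Nat.card V := by
    have h := sum_signChar hf
    rw [← charSum, charSum_eq_card_sub, card_univ, ← Nat.card_eq_fintype_card] at h
    omega
  have hsplit := card_filter_add_card_filter_not (s := univ) fun x ↦ f x = 1
  rw [card_univ, ← Nat.card_eq_fintype_card] at hsplit
  have hzero : #{x | f x = 0} = #{x | ¬ f x = 1} := by
    congr! 2 with x
    rw [← ne_zero_iff_eq_one, not_not]
  obtain rfl | rfl : c = 0 ∨ c = 1 := by revert c; decide
  · omega
  · exact hone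

end Hyperplanes

section Packing

variable {V : Type*} [AddCommGroup V] [Module (ZMod 2) V] {T Z : Finset V}

/-- Two translates of `B` meet in an even number of points, as adding the difference of the
translations is a fixed-point-free involution of the intersection. -/
lemma even_card_vadd_inter_vadd [DecidableEq V] (B : Finset V) {x y : V} (hxy : x ≠ y) :
    Even #((x +ᵥ B) ∩ (y +ᵥ B)) := by
  rw [card_vadd_inter_vadd, neg_finset_eq_self, ZModModule.neg_eq_self]
  exact even_addConvolution_self B (mt add_eq_zero_iff_eq.mp hxy)

lemma card_add_ne_twelve [DecidableEq V] {B : Finset V} (hB : #B = 5) (hZ : #Z = 3) :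
    #(Z + B) ≠ 12 := by
  obtain ⟨x, y, z, hxy, hxz, hyz, rfl⟩ := card_eq_three.mp hZ
  obtain ⟨p, hp⟩ := even_card_vadd_inter_vadd B hxy
  obtain ⟨q, hq⟩ := even_card_vadd_inter_vadd B hxz
  obtain ⟨r, hr⟩ := even_card_vadd_inter_vadd B hyz
  have hunion : {x, y, z} + B = (x +ᵥ B) ∪ (y +ᵥ B) ∪ (z +ᵥ B) := by
    simp only [insert_eq, union_add, singleton_add, ← union_assoc]
  have h2 := card_union_add_card_inter (x +ᵥ B) (y +ᵥ B)
  have h3 := card_union_add_card_inter ((x +ᵥ B) ∪ (y +ᵥ B)) (z +ᵥ B)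
  have hpair := card_union_add_card_inter ((x +ᵥ B) ∩ (z +ᵥ B)) ((y +ᵥ B) ∩ (z +ᵥ B))
  rw [← union_inter_distrib_right, ← inter_inter_distrib_right] at hpair
  have hp' := card_le_card (inter_subset_left (s₁ := (x +ᵥ B) ∩ (y +ᵥ B)) (s₂ := z +ᵥ B))
  have hq' := card_le_card (inter_subset_inter_right (u := z +ᵥ B)
    (inter_subset_left (s₁ := x +ᵥ B) (s₂ := y +ᵥ B)))
  have hr' := card_le_card (inter_subset_inter_right (u := z +ᵥ B)
    (inter_subset_right (s₁ := x +ᵥ B) (s₂ := y +ᵥ B)))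
  simp only [card_vadd_finset] at h2 h3
  rw [hunion]
  omega

lemma exists_dual_eq_one_of_span_eq_top [Finite V] {B : Finset V}
    (hspan : Submodule.span (ZMod 2) (B : Set V) = ⊤) (hB : #B = finrank (ZMod 2) V) :
    ∃ f : Dual (ZMod 2) V, ∀ b ∈ B, f b = 1 := by
  have hlin : LinearIndependent (ZMod 2) ((↑) : B → V) :=
    linearIndependent_of_top_le_span_of_card_eq_finrank (by simp [hspan]) (by simpa)
  exact exists_dual_forall_apply_eq_one (v := id) hlin

/-- If `Z` is separated by the nonzero elements of `T`, on which `f` equals one, then the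
hyperplane `f = c + 1` is the disjoint union of its points in `Z` and of the translates of
`T \ {0}` by the points of `Z` off it. -/
lemma SumCovers.natCard_eq_of_separated [Finite V] [DecidableEq V] (h : SumCovers T Z)
    (hsep : ∀ z ∈ Z, ∀ z' ∈ Z, z ≠ z' → z + z' ∉ T) {f : Dual (ZMod 2) V} (hf0 : f ≠ 0)
    (hf : ∀ t ∈ T.erase 0, f t = 1) (c : ZMod 2) :
    Nat.card V = 2 * (#{z ∈ Z | f z = c + 1} + #({z ∈ Z | f z = c} + T.erase 0)) := by
  have := Fintype.ofFinite V
  rw [← two_mul_card_filter_eq hf0 (c + 1), ← card_union_of_disjoint]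
  · congr 2
    ext v
    simp only [mem_filter, mem_univ, true_and, mem_union, mem_add]
    constructor
    · intro hv
      obtain ⟨t, ht, z, hz, rfl⟩ := h v
      by_cases ht0 : t = 0
      · subst ht0
        exact .inl ⟨by simpa, by simpa using hv⟩
      · have ht' := mem_erase.mpr ⟨ht0, ht⟩
        refine .inr ⟨z, ⟨hz, ?_⟩, t, ht', add_comm z t⟩
        rwa [map_add, hf t ht', add_comm, add_left_inj] at hv
    · rintro (⟨-, hv⟩ | ⟨z, ⟨-, hz⟩, t, ht, rfl⟩)
      · exact hv
      · rw [map_add, hz, hf t ht]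
  · rw [disjoint_left]
    intro v hv hv'
    rw [mem_filter] at hv
    obtain ⟨z, hz, t, ht, rfl⟩ := mem_add.mp hv'
    rw [mem_filter] at hz
    refine hsep z hz.1 (z + t) hv.1 (fun e ↦ ne_of_mem_erase ht (left_eq_add.mp e)) ?_
    rw [← add_assoc, add_self, zero_add]
    exact mem_of_mem_erase ht

theorem SumCovers.eight_le_card_of_separated [Finite V] (h : SumCovers T Z)
    (hV : Nat.card V = 32) (hT : #T = 6) (h0 : 0 ∈ T)
    (hspan : Submodule.span (ZMod 2) (T : Set V) = ⊤)
    (hsep : ∀ z ∈ Z, ∀ z' ∈ Z, z ≠ z' → z + z' ∉ T) : 8 ≤ #Z := by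
  classical
  have hB : #(T.erase 0) = 5 := by rw [card_erase_of_mem h0, hT]
  have hrank : finrank (ZMod 2) V = 5 := by
    rw [natCard_eq_two_pow_finrank] at hV
    exact Nat.pow_right_injective le_rfl hV
  obtain ⟨f, hf⟩ : ∃ f : Dual (ZMod 2) V, ∀ t ∈ T.erase 0, f t = 1 := by
    refine exists_dual_eq_one_of_span_eq_top ?_ (hB.trans hrank.symm)
    rw [coe_erase, Submodule.span_sdiff_singleton_zero, hspan]
  have hf0 : f ≠ 0 := by
    obtain ⟨t, ht⟩ := card_pos.mp (by omega : 0 < #(T.erase 0))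
    rintro rfl
    exact zero_ne_one (hf t ht)
  have hne6 : #Z ≠ 6 := fun hZ ↦ not_sumCovers_of_card_eq_six hV hT hZ h
  have hsplit : #{z ∈ Z | f z = 0} + #{z ∈ Z | f z = 1} = #Z := by
    rw [← card_filter_add_card_filter_not (s := Z) fun z ↦ f z = 0]
    simp only [← ne_eq, ne_zero_iff_eq_one]
  have hfiber (c : ZMod 2) :
      16 = #{z ∈ Z | f z = c + 1} + #({z ∈ Z | f z = c} + T.erase 0) := by
    have := h.natCard_eq_of_separated hsep hf0 hf c
    omega
  have hbound (c : ZMod 2) : #({z ∈ Z | f z = c} + T.erase 0) ≤ #{z ∈ Z | f z = c} * 5 :=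
    hB ▸ card_add_le
  have htwelve (c : ZMod 2) (hc : #{z ∈ Z | f z = c} = 3) := card_add_ne_twelve hB hc
  have h16 := hfiber 0
  have h16' := hfiber 1
  have := hbound 0
  have := hbound 1
  have := htwelve 0
  have := htwelve 1
  rw [zero_add] at h16
  rw [show (1 + 1 : ZMod 2) = 0 by decide] at h16'
  omega

end Packing

section CoveringBounds

variable {V : Type*} [AddCommGroup V] [Module (ZMod 2) V] [Finite V] {T Y : Finset V}

lemma SumCovers.natCard_le_four_mul_of_finrank_le (h : SumCovers T Y) (hT : #T ≤ 5)
    (hV : finrank (ZMod 2) V ≤ 4) : Nat.card V ≤ 4 * #Y := by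
  have hle := h.natCard_le.trans (Nat.mul_le_mul_right _ hT)
  rw [natCard_eq_two_pow_finrank] at hle ⊢
  interval_cases finrank (ZMod 2) V <;> omega

lemma SumCovers.seven_mul_natCard_le_of_finrank_le (h : SumCovers T Y) (hT : #T = 6)
    (hV : finrank (ZMod 2) V ≤ 5) : 7 * Nat.card V ≤ 32 * #Y := by
  have hle := hT ▸ h.natCard_le
  have hthree := natCard_le_two_mul_of_card_right_eq_three h
  have hsix (hY : #Y = 6) : Nat.card V ≠ 32 := fun hV ↦ not_sumCovers_of_card_eq_six hV hT hY h
  rw [natCard_eq_two_pow_finrank] at hle hthree hsix ⊢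
  interval_cases finrank (ZMod 2) V <;> omega

lemma SumCovers.natCard_le_four_mul_of_separated_of_span_eq_top (h : SumCovers T Y) (hT : #T = 6)
    (h0 : 0 ∈ T) (hspan : Submodule.span (ZMod 2) (T : Set V) = ⊤)
    (hsep : ∀ y ∈ Y, ∀ y' ∈ Y, y ≠ y' → y + y' ∉ T) : Nat.card V ≤ 4 * #Y := by
  have hV : finrank (ZMod 2) V ≤ 5 := by
    have := finrank_span_le_card_sub_one h0
    rwa [hspan, finrank_top, hT] at this
  have hle := hT ▸ h.natCard_le
  have hthree := natCard_le_two_mul_of_card_right_eq_three h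
  have height (hV : Nat.card V = 32) := h.eight_le_card_of_separated hV hT h0 hspan hsep
  rw [natCard_eq_two_pow_finrank] at hle hthree height ⊢
  interval_cases finrank (ZMod 2) V <;> omega

theorem SumCovers.natCard_le_four_mul (h : SumCovers T Y) (hT : #T ≤ 5) :
    Nat.card V ≤ 4 * #Y := by
  obtain ⟨T', h0, hT', h'⟩ := h.exists_zero_mem_left
  have hrank := finrank_span_le_card_sub_one h0
  rw [← one_mul (Nat.card V)]
  refine mul_natCard_le_of_forall_cosetSlice (Submodule.span (ZMod 2) (T' : Set V)) fun g ↦ ?_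
  rw [one_mul]
  exact (h'.restrict Submodule.subset_span g).natCard_le_four_mul_of_finrank_le
    (by rwa [card_cosetSlice_zero Submodule.subset_span, hT']) (by omega)

theorem SumCovers.seven_mul_natCard_le (h : SumCovers T Y) (hT : #T = 6) :
    7 * Nat.card V ≤ 32 * #Y := by
  obtain ⟨T', h0, hT', h'⟩ := h.exists_zero_mem_left
  have hrank := finrank_span_le_card_sub_one h0
  refine mul_natCard_le_of_forall_cosetSlice (Submodule.span (ZMod 2) (T' : Set V)) fun g ↦ ?_
  exact (h'.restrict Submodule.subset_span g).seven_mul_natCard_le_of_finrank_le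
    (by rwa [card_cosetSlice_zero Submodule.subset_span, hT']) (by omega)

theorem SumCovers.natCard_le_four_mul_of_separated (h : SumCovers T Y) (hT : #T = 6) (h0 : 0 ∈ T)
    (hsep : ∀ y ∈ Y, ∀ y' ∈ Y, y ≠ y' → y + y' ∉ T) : Nat.card V ≤ 4 * #Y := by
  rw [← one_mul (Nat.card V)]
  refine mul_natCard_le_of_forall_cosetSlice (Submodule.span (ZMod 2) (T : Set V)) fun g ↦ ?_
  rw [one_mul]
  refine (h.restrict Submodule.subset_span g).natCard_le_four_mul_of_separated_of_span_eq_top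
    (by rwa [card_cosetSlice_zero Submodule.subset_span]) (by simpa) ?_ fun y hy y' hy' hne ↦ ?_
  · rw [coe_cosetSlice_zero, Submodule.span_span_coe_preimage]
  · rw [mem_cosetSlice] at hy hy' ⊢
    have hmem := hsep _ hy _ hy' fun e ↦ hne (Subtype.ext (add_right_cancel e))
    rwa [add_zero, Submodule.coe_add, show (y + y' : V) = y + g + (y' + g) by grind [add_self g]]

end CoveringBounds

section Factorization

variable {V : Type*} [AddCommGroup V] {P G : Finset V}

lemma SumCovers.left_eq_of_add_eq_add [Finite V] (h : SumCovers P G)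
    (hcard : #P * #G ≤ Nat.card V) {p p' g g' : V} (hp : p ∈ P) (hp' : p' ∈ P) (hg : g ∈ G)
    (hg' : g' ∈ G) (e : p + g = p' + g') : p = p' := by
  classical
  have := Fintype.ofFinite V
  have huniv : P + G = univ := eq_univ_of_forall fun v ↦ mem_add.mpr (h v)
  have hinj := card_add_iff.mp <| (card_add_le).antisymm <| by
    rwa [huniv, card_univ, ← Nat.card_eq_fintype_card]
  exact congrArg Prod.fst (hinj (Set.mk_mem_prod hp hg) (Set.mk_mem_prod hp' hg') e)

variable [Module (ZMod 2) V]

lemma SumCovers.add_mem_of_factorization [Finite V] [DecidableEq V] {a b c : V}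
    (h : SumCovers {0, a, b, c} G) (hcard : 4 * #G ≤ Nat.card V) (hab : a ≠ b) (hac : a ≠ c)
    (hbc : b ≠ c) {g : V} (hg : g ∈ G) : a + b + c + g ∈ G := by
  have hinj {p p' g' : V} (hp : p ∈ ({0, a, b, c} : Finset V))
      (hp' : p' ∈ ({0, a, b, c} : Finset V)) (hg' : g' ∈ G) (e : p + g = p' + g') : p = p' :=
    h.left_eq_of_add_eq_add ((Nat.mul_le_mul_right _ card_le_four).trans hcard) hp hp' hg hg' e
  obtain ⟨p, hp, g', hg', e⟩ := h (a + b + c + g)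
  simp only [mem_insert, mem_singleton] at hp
  obtain rfl | rfl | rfl | rfl := hp
  · rw [zero_add] at e
    rwa [← e]
  · exact absurd (hinj (by simp) (by simp) hg' (by grind [add_self c] : b + g = c + g')) hbc
  · exact absurd (hinj (by simp) (by simp) hg' (by grind [add_self c] : a + g = c + g')) hac
  · exact absurd (hinj (by simp) (by simp) hg' (by grind [add_self b] : a + g = b + g')) hab

lemma four_le_addConvolution_self [DecidableEq V] {τ w : V} (hτ : τ ≠ 0)
    (hper : ∀ g ∈ G, τ + g ∈ G) (hw : ∃ g ∈ G, ∃ g' ∈ G, g + g' = w) (hw0 : w ≠ 0) (hwτ : w ≠ τ) :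
    4 ≤ G.addConvolution G w := by
  obtain ⟨g, hg, g', hg', rfl⟩ := hw
  have hsub : {g, g', τ + g, τ + g'} ⊆ ({t ∈ G | g + g' + t ∈ G} : Finset V) := by
    simp only [insert_subset_iff, singleton_subset_iff, mem_filter]
    refine ⟨⟨hg, ?_⟩, ⟨hg', ?_⟩, ⟨hper g hg, ?_⟩, ⟨hper g' hg', ?_⟩⟩
    · rwa [show g + g' + g = g' by grind [add_self g]]
    · rwa [show g + g' + g' = g by grind [add_self g']]
    · rw [show g + g' + (τ + g) = τ + g' by grind [add_self g]]
      exact hper g' hg'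
    · rw [show g + g' + (τ + g') = τ + g by grind [add_self g']]
      exact hper g hg
  have hne : g ≠ g' := mt add_eq_zero_iff_eq.mpr hw0
  have hg_τ : g ≠ τ + g' := fun e ↦ hwτ (by rw [e]; grind [add_self g'])
  have hg'_τ : g' ≠ τ + g := fun e ↦ hwτ (by rw [e]; grind [add_self g])
  rw [addConvolution_self]
  refine le_of_eq_of_le ?_ (card_le_card hsub)
  rw [card_insert_of_notMem, card_insert_of_notMem, card_insert_of_notMem, card_singleton] <;>
    simp [hne, hg_τ, hg'_τ, hτ]

lemma exists_dual_eq_zero_eq_one {x y : V} (hx : x ≠ 0) (hxy : x ≠ y) :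
    ∃ f : Dual (ZMod 2) V, f y = 0 ∧ f x = 1 := by
  have hmem : x ∉ Submodule.span (ZMod 2) {y} := by
    rw [Submodule.mem_span_singleton]
    rintro ⟨c, rfl⟩
    obtain rfl | rfl : c = 0 ∨ c = 1 :=
      or_iff_not_imp_left.mpr ne_zero_iff_eq_one.mp
    · exact hx (zero_smul _ _)
    · exact hxy (one_smul _ _)
  obtain ⟨f, hfx, hf⟩ := Submodule.exists_le_ker_of_notMem hmem
  exact ⟨f, hf (Submodule.mem_span_singleton_self y), ne_zero_iff_eq_one.mp hfx⟩

end Factorization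

section Periodic

variable {V : Type*} [AddCommGroup V] [Module (ZMod 2) V] {G : Finset V}

/-- The right-hand side is a pointwise lower bound for the representation count, and by `hcard`
its total is at least `#G ^ 2`. -/
lemma addConvolution_self_of_periodic [Finite V] [DecidableEq V] {K : Submodule (ZMod 2) V}
    [DecidablePred (· ∈ K)] {τ : V} (hτ : τ ≠ 0) (hτK : τ ∈ K) (hper : ∀ g ∈ G, τ + g ∈ G)
    (hK : ∀ w ∉ K, ∃ g ∈ G, ∃ g' ∈ G, g + g' = w)
    (hcard : #G * #G + 4 * Nat.card K ≤ 4 * Nat.card V + 2 * #G) (w : V) :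
    (G.addConvolution G w : ℤ) = 4 - (if w ∈ K then 4 else 0) + (if w = 0 then (#G : ℤ) else 0) +
      (if w = τ then (#G : ℤ) else 0) := by
  have := Fintype.ofFinite V
  have hGτ : G.addConvolution G τ = #G := by
    rw [addConvolution_self, filter_true_of_mem hper]
  have hle (w : V) : 4 - (if w ∈ K then 4 else 0) + (if w = 0 then (#G : ℤ) else 0) +
      (if w = τ then (#G : ℤ) else 0) ≤ G.addConvolution G w := by
    by_cases hw0 : w = 0
    · simp [hw0, hτ.symm, addConvolution_self_zero]
    by_cases hwτ : w = τ
    · simp [hwτ, hτ, hτK, hGτ]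
    by_cases hwK : w ∈ K
    · simp [hw0, hwτ, hwK]
    · simpa [hw0, hwτ, hwK] using four_le_addConvolution_self hτ hper (hK w hwK) hw0 hwτ
  refine ((sum_eq_sum_iff_of_le fun w _ ↦ hle w).mp ?_ w (mem_univ w)).symm
  refine (sum_le_sum fun w _ ↦ hle w).antisymm ?_
  have hKcard : #{w | w ∈ K} = Nat.card K := by
    rw [← Fintype.card_subtype, ← Nat.card_eq_fintype_card]
  rw [← Nat.cast_sum, sum_addConvolution]
  simp only [sum_add_distrib, sum_sub_distrib, sum_const, card_univ, ← sum_filter,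
    filter_eq', mem_univ, if_true, card_singleton, hKcard, ← Nat.card_eq_fintype_card,
    nsmul_eq_mul]
  zify at hcard
  push_cast
  linarith

lemma sum_filter_mem_signChar [Fintype V] {K : Submodule (ZMod 2) V} [DecidablePred (· ∈ K)]
    {f : Dual (ZMod 2) V} {a : V} (ha : a ∈ K) (hfa : f a = 1) :
    ∑ x with x ∈ K, signChar f x = 0 := by
  have := Fintype.ofFinite K
  have hf : f.comp K.subtype ≠ 0 := fun h ↦ by
    simpa [hfa] using DFunLike.congr_fun h ⟨a, ha⟩
  rw [← sum_signChar hf]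
  exact sum_subtype _ (by simp) _

lemma charSum_mul_self_of_periodic [Finite V] {K : Submodule (ZMod 2) V} {τ a : V}
    {f : Dual (ZMod 2) V} (hτ : τ ≠ 0) (hτK : τ ∈ K) (hper : ∀ g ∈ G, τ + g ∈ G)
    (hK : ∀ w ∉ K, ∃ g ∈ G, ∃ g' ∈ G, g + g' = w)
    (hcard : #G * #G + 4 * Nat.card K ≤ 4 * Nat.card V + 2 * #G) (ha : a ∈ K) (hfa : f a = 1)
    (hfτ : f τ = 0) : charSum G f * charSum G f = 2 * #G := by
  classical
  have := Fintype.ofFinite V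
  have hf : f ≠ 0 := by
    rintro rfl
    exact zero_ne_one hfa
  have hKsum : ∑ x, (if x ∈ K then 4 * signChar f x else 0) = 0 := by
    rw [← sum_filter, ← mul_sum, sum_filter_mem_signChar ha hfa, mul_zero]
  rw [charSum_mul_charSum, walsh]
  simp only [addConvolution_self_of_periodic hτ hτK hper hK hcard, add_mul, sub_mul,
    sum_add_distrib, sum_sub_distrib, ← mul_sum, sum_signChar hf, ite_mul, zero_mul, hKsum,
    sum_ite_eq', mem_univ, if_true, AddChar.map_zero_eq_one, signChar_of_eq_zero hfτ]
  ring

/-- In a perfect factorization `W = P + G` with `P = {0, a, b, c}`, the factor `G` is periodic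
under `a + b + c`. Its representation counts are then forced, and give it a character
sum whose square is `32`. -/
theorem SumCovers.false_of_card_eq_four [Finite V] (hV : Nat.card V = 64) {P : Finset V}
    (h : SumCovers P G) (hP : #P = 4) (hG : #G = 16) (h0 : 0 ∈ P)
    (hcap : ∀ p ∈ P, ∀ p' ∈ P, p ≠ 0 → p' ≠ 0 → p ≠ p' → p + p' ∉ P)
    (hsum : ∀ w, (∃ p ∈ P, ∃ p' ∈ P, p + p' = w) ∨ ∃ g ∈ G, ∃ g' ∈ G, g + g' = w) : False := by
  classical
  obtain ⟨a, b, c, hab, hac, hbc, hP'⟩ := card_eq_three.mp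
    (by rw [card_erase_of_mem h0, hP] : #(P.erase 0) = 3)
  obtain rfl : P = {0, a, b, c} := by rw [← hP', insert_erase h0]
  have hne {x : V} (hx : x ∈ ({a, b, c} : Finset V)) : x ≠ 0 :=
    ne_of_mem_erase (hP' ▸ hx)
  have hτ : a + b + c ≠ 0 := by
    intro e
    refine hcap a (by simp) b (by simp) (hne (by simp)) (hne (by simp)) hab ?_
    simp [add_eq_zero_iff_eq.mp e]
  let K := Submodule.span (ZMod 2) (({a, b, c} : Finset V) : Set V)
  have haK : a ∈ K := Submodule.subset_span (by simp)
  have hbK : b ∈ K := Submodule.subset_span (by simp)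
  have hcK : c ∈ K := Submodule.subset_span (by simp)
  have hKcard : Nat.card K ≤ 8 := by
    rw [natCard_eq_two_pow_finrank]
    exact Nat.pow_le_pow_right two_pos ((finrank_span_finset_le_card _).trans card_le_three)
  have hPK {p : V} (hp : p ∈ ({0, a, b, c} : Finset V)) : p ∈ K := by
    simp only [mem_insert, mem_singleton] at hp
    obtain rfl | rfl | rfl | rfl := hp
    exacts [K.zero_mem, haK, hbK, hcK]
  have hK (w : V) (hw : w ∉ K) : ∃ g ∈ G, ∃ g' ∈ G, g + g' = w :=
    (hsum w).resolve_left fun ⟨p, hp, p', hp', e⟩ ↦ hw (e ▸ K.add_mem (hPK hp) (hPK hp'))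
  obtain ⟨f, hfτ, hfa⟩ : ∃ f : Dual (ZMod 2) V, f (a + b + c) = 0 ∧ f a = 1 :=
    exists_dual_eq_zero_eq_one (hne (by simp)) fun e ↦ by
      rw [add_assoc, left_eq_add, add_eq_zero_iff_eq] at e
      exact hbc e
  have hsq := charSum_mul_self_of_periodic hτ (K.add_mem (K.add_mem haK hbK) hcK)
    (fun g hg ↦ h.add_mem_of_factorization (by rw [hG, hV]) hab hac hbc hg) hK
    (by rw [hG, hV]; omega) haK hfa hfτ
  rw [hG] at hsq
  exact (by norm_num : ¬ IsSquare (2 * 16 : ℤ)) ⟨_, hsq.symm⟩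

end Periodic

section HyperplaneSlices

variable {V : Type*} [AddCommGroup V] [Module (ZMod 2) V] {A : Finset V} {f : Dual (ZMod 2) V}
  {t : V}

lemma card_filter_eq_zero_add_card_filter_eq_one (A : Finset V) (f : Dual (ZMod 2) V) :
    #{a ∈ A | f a = 0} + #{a ∈ A | f a = 1} = #A := by
  rw [← card_filter_add_card_filter_not (s := A) fun a ↦ f a = 0]
  simp only [← ne_eq, ne_zero_iff_eq_one]

lemma card_cosetSlice_ker_zero (A : Finset V) (f : Dual (ZMod 2) V) :
    #(cosetSlice (LinearMap.ker f) A 0) = #{a ∈ A | f a = 0} := by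
  classical
  simp [card_cosetSlice]

lemma card_cosetSlice_ker (A : Finset V) (ht : f t = 1) :
    #(cosetSlice (LinearMap.ker f) A t) = #{a ∈ A | f a = 1} := by
  classical
  simp [card_cosetSlice, sub_eq_zero, ht]

lemma SumCovers.cosetSlice_ker (h : SumCovers A A) (ht : f t = 1) :
    SumCovers (cosetSlice (LinearMap.ker f) A 0) (cosetSlice (LinearMap.ker f) A t) := by
  intro x
  obtain ⟨a, b, ha, hb, e, hfa⟩ : ∃ a b, a ∈ A ∧ b ∈ A ∧ a + b = x + t ∧ f a = 0 := by
    obtain ⟨a, ha, b, hb, e⟩ := h (x + t)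
    by_cases hfa : f a = 0
    · exact ⟨a, b, ha, hb, e, hfa⟩
    · refine ⟨b, a, hb, ha, by rw [add_comm, e], ?_⟩
      have hfe := congrArg f e
      rwa [map_add, map_add, ne_zero_iff_eq_one.mp hfa, LinearMap.mem_ker.mp x.2, ht, zero_add,
        add_eq_left] at hfe
  have hb' : (x : V) + a + t = b := by rw [add_right_comm, ← e]; grind [add_self a]
  refine ⟨⟨a, hfa⟩, by simpa, ⟨x + a, by simp [hfa]⟩, by simpa [hb'], Subtype.ext ?_⟩
  change a + (x + a) = (x : V)
  grind [add_self a]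

end HyperplaneSlices

section LowerBound

variable {V : Type*} [AddCommGroup V] [Module (ZMod 2) V] {A : Finset V}

lemma SumCovers.seven_le_card [Finite V] {T Y : Finset V} (h : SumCovers T Y)
    (hV : Nat.card V = 64) (hcard : #T + #Y ≤ 19) : 7 ≤ #T := by
  have hprod := h.natCard_le
  have hfive := h.natCard_le_four_mul
  have hsix := h.seven_mul_natCard_le
  rw [hV] at hprod hfive hsix
  by_contra! hT
  interval_cases #T <;> omega

lemma SumCovers.seven_le_card_filter [Finite V] (h : SumCovers A A) (hV : Nat.card V = 128)
    (hcard : #A = 19) {f : Dual (ZMod 2) V} (hf : f ≠ 0) :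
    7 ≤ #{a ∈ A | f a = 0} ∧ 7 ≤ #{a ∈ A | f a = 1} := by
  obtain ⟨t, ht⟩ := DFunLike.ne_iff.mp hf
  replace ht : f t = 1 := ne_zero_iff_eq_one.mp ht
  have hker : Nat.card (LinearMap.ker f) = 64 := by
    have := natCard_ker hf
    omega
  have hcov := h.cosetSlice_ker ht
  rw [← card_cosetSlice_ker_zero, ← card_cosetSlice_ker A ht]
  have hsum : #(cosetSlice (LinearMap.ker f) A 0) + #(cosetSlice (LinearMap.ker f) A t) = 19 := by
    rw [card_cosetSlice_ker_zero, card_cosetSlice_ker A ht,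
      card_filter_eq_zero_add_card_filter_eq_one, hcard]
  exact ⟨hcov.seven_le_card hker hsum.le, hcov.symm.seven_le_card hker (by omega)⟩

/-- The parity of `#{a ∈ A | f a = 1}` decides the sign of `f` at `∑ A` and confines
`± charSum A f` to `{3, -1, -5}`, on which `x ^ 2 + 2 * x ≤ 15`. -/
lemma SumCovers.charSum_sq_add_le [Finite V] (h : SumCovers A A) (hV : Nat.card V = 128)
    (hcard : #A = 19) {f : Dual (ZMod 2) V} (hf : f ≠ 0) :
    charSum A f * charSum A f + 2 * (charSum A f * signChar f (∑ a ∈ A, a)) ≤ 15 := by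
  obtain ⟨h0, h1⟩ := h.seven_le_card_filter hV hcard hf
  have hadd := card_filter_eq_zero_add_card_filter_eq_one A f
  have hchar := charSum_eq_card_sub A f
  by_cases hσ : f (∑ a ∈ A, a) = 0
  · have hmod := charSum_modEq_of_apply_sum_eq_zero hσ
    rw [Int.modEq_iff_dvd] at hmod
    rw [signChar_of_eq_zero hσ]
    nlinarith [(by omega : charSum A f ≤ 3), (by omega : -5 ≤ charSum A f)]
  · replace hσ := ne_zero_iff_eq_one.mp hσ
    have hmod := charSum_modEq_of_apply_sum_eq_one hσ
    rw [Int.modEq_iff_dvd] at hmod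
    rw [signChar_of_eq_one hσ]
    nlinarith [(by omega : charSum A f ≤ 5), (by omega : -3 ≤ charSum A f)]

lemma SumCovers.card_ne_nineteen [Finite V] (h : SumCovers A A) (hV : Nat.card V = 128) :
    #A ≠ 19 := by
  classical
  intro hcard
  have := Fintype.ofFinite V
  have := finite_of_finite (ZMod 2) (M := Dual (ZMod 2) V)
  have := Fintype.ofFinite (Dual (ZMod 2) V)
  have hdual : (Fintype.card (Dual (ZMod 2) V) : ℤ) = 128 := by
    rw [← Nat.card_eq_fintype_card, natCard_dual, hV]; rfl
  have hle := sum_le_sum fun f (hf : f ∈ univ.erase 0) ↦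
    h.charSum_sq_add_le hV hcard (ne_of_mem_erase hf)
  rw [sum_erase_eq_sub (mem_univ _), sum_erase_eq_sub (mem_univ _), sum_add_distrib, ← mul_sum,
    sum_charSum_mul_self, sum_charSum_mul_signChar, sum_const, card_univ, nsmul_eq_mul, hdual, hV,
    hcard, charSum_zero, hcard, signChar_zero_left] at hle
  split_ifs at hle <;> norm_num at hle

theorem SumCovers.twenty_le_card [Finite V] (h : SumCovers A A) (hV : Nat.card V = 128) :
    20 ≤ #A := by
  classical
  have := Fintype.ofFinite V
  by_contra! hA
  obtain ⟨B, hAB, hB⟩ := exists_superset_card_eq (s := A) (n := 19) (by omega)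
    (by rw [← Nat.card_eq_fintype_card, hV]; norm_num)
  exact (h.mono hAB hAB).card_ne_nineteen hV hB

end LowerBound

section Caps

variable {V : Type*} [AddCommGroup V] [Module (ZMod 2) V] {A : Finset V}

/-- A complete cap of the projective space of `V` together with the zero vector: `A` covers with
itself, and no sum of two distinct points lies in `A`. -/
structure IsPointedCompleteCap (A : Finset V) : Prop where
  zero_mem : 0 ∈ A
  sumCovers : SumCovers A A
  add_notMem : ∀ a ∈ A, ∀ b ∈ A, a ≠ 0 → b ≠ 0 → a ≠ b → a + b ∉ A

namespace IsPointedCompleteCap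

lemma addConvolution_eq_two [DecidableEq V] (hA : IsPointedCompleteCap A) {s : V} (hs : s ∈ A)
    (hs0 : s ≠ 0) : A.addConvolution A s = 2 := by
  rw [addConvolution_self, ← card_pair hs0.symm]
  congr 1
  ext t
  rw [mem_filter, mem_insert, mem_singleton]
  refine ⟨fun ⟨ht, hst⟩ ↦ ?_, ?_⟩
  · by_contra! hne
    exact hA.add_notMem s hs t ht hs0 hne.1 hne.2.symm hst
  · rintro (rfl | rfl)
    · exact ⟨hA.zero_mem, by rwa [add_zero]⟩
    · exact ⟨hs, by rw [add_self]; exact hA.zero_mem⟩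

lemma sum_charSum_cube [Finite V] [Fintype (Dual (ZMod 2) V)] (hA : IsPointedCompleteCap A) :
    ∑ f, charSum A f * charSum A f * charSum A f = Nat.card V * (3 * #A - 2) := by
  classical
  have hrest : ∑ s ∈ A.erase 0, (A.addConvolution A s : ℤ) = ∑ _s ∈ A.erase 0, 2 :=
    sum_congr rfl fun s hs ↦ by
      rw [hA.addConvolution_eq_two (mem_of_mem_erase hs) (ne_of_mem_erase hs), Nat.cast_ofNat]
  rw [sum_charSum_mul_charSum_mul_charSum, ← add_sum_erase _ _ hA.zero_mem, hrest, sum_const,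
    addConvolution_self_zero, nsmul_eq_mul, cast_card_erase_of_mem hA.zero_mem]
  ring

lemma card_filter_ne_four [Finite V] (hA : IsPointedCompleteCap A) (hV : Nat.card V = 128)
    (hcard : #A = 20) {f : Dual (ZMod 2) V} (hf : f ≠ 0) : #{a ∈ A | f a = 0} ≠ 4 := by
  intro hfour
  obtain ⟨t, ht⟩ := DFunLike.ne_iff.mp hf
  replace ht : f t = 1 := ne_zero_iff_eq_one.mp ht
  have := Fintype.ofFinite (LinearMap.ker f)
  have hadd := card_filter_eq_zero_add_card_filter_eq_one A f
  refine (hA.sumCovers.cosetSlice_ker ht).false_of_card_eq_four ?_ ?_ ?_ ?_ ?_ fun w ↦ ?_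
  · have := natCard_ker hf
    omega
  · rw [card_cosetSlice_ker_zero, hfour]
  · rw [card_cosetSlice_ker A ht]
    omega
  · simpa using hA.zero_mem
  · intro p hp p' hp' hp0 hp0' hne
    rw [mem_cosetSlice, add_zero] at hp hp' ⊢
    exact hA.add_notMem p hp p' hp' (fun e ↦ hp0 (Subtype.ext e))
      (fun e ↦ hp0' (Subtype.ext e)) fun e ↦ hne (Subtype.ext e)
  · obtain ⟨a, ha, b, hb, e⟩ := hA.sumCovers w
    have hfe : f a = f b := by
      rw [← add_eq_zero_iff_eq, ← map_add, e, LinearMap.mem_ker.mp w.2]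
    by_cases hfa : f a = 0
    · exact .inl ⟨⟨a, hfa⟩, by simpa, ⟨b, hfe.symm.trans hfa⟩, by simpa, Subtype.ext e⟩
    · have hfa := ne_zero_iff_eq_one.mp hfa
      refine .inr ⟨⟨a + t, ?_⟩, ?_, ⟨b + t, ?_⟩, ?_, Subtype.ext ?_⟩
      · rw [LinearMap.mem_ker, map_add, hfa, ht, add_self]
      · rwa [mem_cosetSlice, add_assoc, add_self, add_zero]
      · rw [LinearMap.mem_ker, map_add, ← hfe, hfa, ht, add_self]
      · rwa [mem_cosetSlice, add_assoc, add_self, add_zero]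
      · rw [Submodule.coe_add, ← e]
        grind [add_self t]

lemma seven_le_card_filter [Finite V] (hA : IsPointedCompleteCap A) (hV : Nat.card V = 128)
    (hcard : #A = 20) {f : Dual (ZMod 2) V} (hf : f ≠ 0) : 7 ≤ #{a ∈ A | f a = 0} := by
  obtain ⟨t, ht⟩ := DFunLike.ne_iff.mp hf
  replace ht : f t = 1 := ne_zero_iff_eq_one.mp ht
  have hker : Nat.card (LinearMap.ker f) = 64 := by
    have := natCard_ker hf
    omega
  have hne_four := hA.card_filter_ne_four hV hcard hf
  have hadd := card_filter_eq_zero_add_card_filter_eq_one A f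
  have hcov := hA.sumCovers.cosetSlice_ker ht
  have hprod := hcov.natCard_le
  have hfive := hcov.natCard_le_four_mul
  have hsix (h6 : #(cosetSlice (LinearMap.ker f) A 0) = 6) :=
    hcov.natCard_le_four_mul_of_separated h6 (by simpa using hA.zero_mem)
      fun y hy y' hy' hne hmem ↦ by
        have hone (y : LinearMap.ker f) : (y : V) + t ≠ 0 := fun e ↦ by
          have := congrArg f e
          rw [map_add, LinearMap.mem_ker.mp y.2, zero_add, map_zero, ht] at this
          exact one_ne_zero this
        rw [mem_cosetSlice] at hy hy' hmem
        refine hA.add_notMem _ hy _ hy' (hone y) (hone y')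
          (fun e ↦ hne (Subtype.ext (add_right_cancel e))) ?_
        rwa [add_add_add_comm, add_self, ← Submodule.coe_add]
  rw [card_cosetSlice_ker_zero, card_cosetSlice_ker A ht, hker] at hprod hfive
  rw [card_cosetSlice_ker_zero, card_cosetSlice_ker A ht, hker] at hsix
  by_contra! hlt
  interval_cases #{a ∈ A | f a = 0} <;> omega

end IsPointedCompleteCap

end Caps

section CapSpectrum

variable {V : Type*} [AddCommGroup V] [Module (ZMod 2) V] {A : Finset V}

lemma charSum_add (A : Finset V) (f g : Dual (ZMod 2) V) :
    charSum A (f + g) = charSum A g - 2 * charSum {a ∈ A | f a = 1} g := by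
  simp only [charSum, sum_filter, mul_sum, ← sum_sub_distrib]
  refine sum_congr rfl fun a _ ↦ ?_
  rw [signChar_add_left]
  split_ifs with h
  · rw [signChar_of_eq_one h]
    ring
  · rw [signChar_of_eq_zero (not_not.mp (mt ne_zero_iff_eq_one.mp h))]
    ring

/-- The right-hand side counts with the weight `(1 + (-1) ^ f x) * (1 + (-1) ^ f y)`, whose average
over all functionals is at least one. -/
lemma natCard_le_four_mul_card_dual [Finite V] [Fintype (Dual (ZMod 2) V)] (x y : V) :
    Nat.card V ≤ 4 * #{f : Dual (ZMod 2) V | f x = 0 ∧ f y = 0} := by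
  classical
  have hterm (f : Dual (ZMod 2) V) : (if f x = 0 ∧ f y = 0 then 4 else 0) =
      1 + signChar f x + signChar f y + signChar f (x + y) := by
    rw [AddChar.map_add_eq_mul]
    by_cases hx : f x = 0 <;> by_cases hy : f y = 0 <;>
      simp [signChar_of_eq_zero, signChar_of_eq_one, ne_zero_iff_eq_one.mp, hx, hy]
  have hsum : (4 * #{f : Dual (ZMod 2) V | f x = 0 ∧ f y = 0} : ℤ) =
      ∑ f : Dual (ZMod 2) V, (1 + signChar f x + signChar f y + signChar f (x + y)) := by
    rw [← sum_congr rfl fun f _ ↦ hterm f, ← sum_filter, sum_const, nsmul_eq_mul, mul_comm]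
  have hone : ∑ _f : Dual (ZMod 2) V, (1 : ℤ) = Nat.card V := by
    simp [← natCard_dual (V := V), Nat.card_eq_fintype_card]
  zify
  rw [hsum, sum_add_distrib, sum_add_distrib, sum_add_distrib, hone, sum_dual_signChar,
    sum_dual_signChar, sum_dual_signChar]
  split_ifs <;> linarith

lemma apply_sum_eq_one_of_charSum_eq_six {f : Dual (ZMod 2) V} (hcard : #A = 20)
    (hf : charSum A f = 6) : f (∑ a ∈ A, a) = 1 := by
  rw [← ne_zero_iff_eq_one]
  intro hσ
  have hmod := charSum_modEq_of_apply_sum_eq_zero hσ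
  rw [hf, hcard] at hmod
  exact absurd hmod (by decide)

/-- The cubic `(x - 2) * (x ^ 2 - 26 ± 10)` in `x = charSum A f`, with the sign of `signChar f` at
`∑ A`. For a pointed complete cap of 20 vectors in dimension seven it is nonnegative, and its total
over all `f` is at most its value at `f = 0`, so it vanishes at every other `f`. -/
noncomputable def capWeight (A : Finset V) (f : Dual (ZMod 2) V) : ℤ :=
  (charSum A f - 2) * (charSum A f * charSum A f - 26 + 10 * signChar f (∑ a ∈ A, a))

lemma capWeight_zero (hcard : #A = 20) : capWeight A (0 : Dual (ZMod 2) V) = 6912 := by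
  simp [capWeight, hcard]

namespace IsPointedCompleteCap

variable {f k : Dual (ZMod 2) V}

lemma neg_six_le_charSum [Finite V] (hA : IsPointedCompleteCap A) (hV : Nat.card V = 128)
    (hcard : #A = 20) (f : Dual (ZMod 2) V) : -6 ≤ charSum A f := by
  obtain rfl | hf := eq_or_ne f 0
  · rw [charSum_zero]
    linarith [Int.natCast_nonneg #A]
  · have := hA.seven_le_card_filter hV hcard hf
    have hadd := card_filter_eq_zero_add_card_filter_eq_one A f
    rw [charSum_eq_card_sub]
    omega

lemma charSum_cases_of_apply_sum_eq_zero [Finite V] (hA : IsPointedCompleteCap A)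
    (hV : Nat.card V = 128) (hcard : #A = 20) (hσ : f (∑ a ∈ A, a) = 0) :
    charSum A f = 4 ∨ charSum A f = -4 ∨ 0 < capWeight A f := by
  have hmod := charSum_modEq_of_apply_sum_eq_zero hσ
  rw [Int.modEq_iff_dvd] at hmod
  have := hA.neg_six_le_charSum hV hcard f
  rw [capWeight, signChar_of_eq_zero hσ]
  obtain h | h | h | h : charSum A f = 4 ∨ charSum A f = -4 ∨ charSum A f = 0 ∨
    8 ≤ charSum A f := by omega
  · exact .inl h
  · exact .inr (.inl h)
  · norm_num [h]
  · exact .inr (.inr (mul_pos (by linarith) (by nlinarith)))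

lemma charSum_cases_of_apply_sum_eq_one [Finite V] (hA : IsPointedCompleteCap A)
    (hV : Nat.card V = 128) (hcard : #A = 20) (hσ : f (∑ a ∈ A, a) = 1) :
    charSum A f = 2 ∨ charSum A f = 6 ∨ charSum A f = -6 ∨ 0 < capWeight A f := by
  have hmod := charSum_modEq_of_apply_sum_eq_one hσ
  rw [Int.modEq_iff_dvd] at hmod
  have := hA.neg_six_le_charSum hV hcard f
  rw [capWeight, signChar_of_eq_one hσ]
  obtain h | h | h | h | h : charSum A f = 2 ∨ charSum A f = 6 ∨ charSum A f = -6 ∨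
    charSum A f = -2 ∨ 10 ≤ charSum A f := by omega
  · exact .inl h
  · exact .inr (.inl h)
  · exact .inr (.inr (.inl h))
  · norm_num [h]
  · exact .inr (.inr (.inr (mul_pos (by linarith) (by nlinarith))))

lemma capWeight_nonneg [Finite V] (hA : IsPointedCompleteCap A) (hV : Nat.card V = 128)
    (hcard : #A = 20) (f : Dual (ZMod 2) V) : 0 ≤ capWeight A f := by
  by_cases hσ : f (∑ a ∈ A, a) = 0
  · obtain h | h | h := hA.charSum_cases_of_apply_sum_eq_zero hV hcard hσ
    · simp [capWeight, h, signChar_of_eq_zero hσ]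
    · simp [capWeight, h, signChar_of_eq_zero hσ]
    · exact h.le
  · have hσ := ne_zero_iff_eq_one.mp hσ
    obtain h | h | h | h := hA.charSum_cases_of_apply_sum_eq_one hV hcard hσ
    · simp [capWeight, h]
    · simp [capWeight, h, signChar_of_eq_one hσ]
    · simp [capWeight, h, signChar_of_eq_one hσ]
    · exact h.le

variable [Finite V]

lemma sum_ne_zero (hA : IsPointedCompleteCap A) (hV : Nat.card V = 128) (hcard : #A = 20) :
    ∑ a ∈ A, a ≠ 0 := by
  classical
  have := finite_of_finite (ZMod 2) (M := Dual (ZMod 2) V)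
  have := Fintype.ofFinite (Dual (ZMod 2) V)
  intro hσ
  have hnonneg (f : Dual (ZMod 2) V) :
      0 ≤ charSum A f * charSum A f * charSum A f - 16 * (charSum A f * signChar f 0) := by
    have hmod := charSum_modEq_of_apply_sum_eq_zero (A := A) (f := f) (by rw [hσ, map_zero])
    rw [Int.modEq_iff_dvd] at hmod
    have := hA.neg_six_le_charSum hV hcard f
    rw [AddChar.map_zero_eq_one]
    obtain h | h | h : charSum A f = -4 ∨ charSum A f = 0 ∨ 4 ≤ charSum A f := by omega
    · norm_num [h]
    · norm_num [h]
    · nlinarith [mul_nonneg (by linarith : 0 ≤ charSum A f) (by linarith : 0 ≤ charSum A f - 4)]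
  have hle := single_le_sum (fun f _ ↦ hnonneg f) (mem_univ 0)
  rw [sum_sub_distrib, ← mul_sum, hA.sum_charSum_cube, sum_charSum_mul_signChar, if_pos hA.zero_mem,
    charSum_zero, hcard, hV, AddChar.map_zero_eq_one] at hle
  norm_num at hle

lemma sum_capWeight [Fintype (Dual (ZMod 2) V)] [DecidableEq V]
    (hA : IsPointedCompleteCap A) (hV : Nat.card V = 128) (hcard : #A = 20) :
    ∑ f, capWeight A f = 5632 + if ∑ a ∈ A, a ∈ A then 1280 else 0 := by
  have hexpand (f : Dual (ZMod 2) V) : capWeight A f = charSum A f * charSum A f * charSum A f -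
      2 * (charSum A f * charSum A f) - 26 * (charSum A f * signChar f 0) + 52 * signChar f 0 +
      10 * (charSum A f * signChar f (∑ a ∈ A, a)) - 20 * signChar f (∑ a ∈ A, a) := by
    rw [capWeight, AddChar.map_zero_eq_one]
    ring
  simp only [hexpand, sum_sub_distrib, sum_add_distrib, ← mul_sum, hA.sum_charSum_cube,
    sum_charSum_mul_self, sum_charSum_mul_signChar, sum_dual_signChar, hA.zero_mem,
    hA.sum_ne_zero hV hcard, hV, hcard, if_true, if_false]
  split_ifs <;> norm_num

lemma sum_mem (hA : IsPointedCompleteCap A) (hV : Nat.card V = 128) (hcard : #A = 20) :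
    ∑ a ∈ A, a ∈ A := by
  classical
  have := finite_of_finite (ZMod 2) (M := Dual (ZMod 2) V)
  have := Fintype.ofFinite (Dual (ZMod 2) V)
  by_contra hσ
  have hle := single_le_sum (fun f _ ↦ hA.capWeight_nonneg hV hcard f) (mem_univ 0)
  rw [hA.sum_capWeight hV hcard, if_neg hσ, capWeight_zero hcard] at hle
  norm_num at hle

lemma capWeight_eq_zero (hA : IsPointedCompleteCap A) (hV : Nat.card V = 128) (hcard : #A = 20)
    (hf : f ≠ 0) : capWeight A f = 0 := by
  classical
  have := finite_of_finite (ZMod 2) (M := Dual (ZMod 2) V)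
  have := Fintype.ofFinite (Dual (ZMod 2) V)
  have hsum := hA.sum_capWeight hV hcard
  rw [if_pos (hA.sum_mem hV hcard), ← add_sum_erase _ _ (mem_univ 0), capWeight_zero hcard] at hsum
  exact (sum_eq_zero_iff_of_nonneg fun f _ ↦ hA.capWeight_nonneg hV hcard f).mp (by linarith) f
    (mem_erase.mpr ⟨hf, mem_univ f⟩)

lemma charSum_eq_of_apply_sum_eq_zero (hA : IsPointedCompleteCap A) (hV : Nat.card V = 128)
    (hcard : #A = 20) (hf : f ≠ 0) (hσ : f (∑ a ∈ A, a) = 0) :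
    charSum A f = 4 ∨ charSum A f = -4 := by
  have hcases := hA.charSum_cases_of_apply_sum_eq_zero hV hcard hσ
  rwa [hA.capWeight_eq_zero hV hcard hf, lt_self_iff_false, or_false] at hcases

lemma charSum_eq_of_apply_sum_eq_one (hA : IsPointedCompleteCap A) (hV : Nat.card V = 128)
    (hcard : #A = 20) (hσ : f (∑ a ∈ A, a) = 1) :
    charSum A f = 2 ∨ charSum A f = 6 ∨ charSum A f = -6 := by
  have hf : f ≠ 0 := by
    rintro rfl
    exact zero_ne_one hσ
  have hcases := hA.charSum_cases_of_apply_sum_eq_one hV hcard hσ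
  rwa [hA.capWeight_eq_zero hV hcard hf, lt_self_iff_false, or_false] at hcases

/-- The weight `(1 - (-1) ^ f σ) * (x ^ 2 + 4 * x - 12)` with `x = charSum A f` and `σ = ∑ A`
vanishes unless `x = 6`. -/
lemma card_charSum_eq_six [Fintype (Dual (ZMod 2) V)] (hA : IsPointedCompleteCap A)
    (hV : Nat.card V = 128) (hcard : #A = 20) : #{f : Dual (ZMod 2) V | charSum A f = 6} = 8 := by
  classical
  have hterm (f : Dual (ZMod 2) V) : (if charSum A f = 6 then 96 else 0) =
      charSum A f * charSum A f + 4 * (charSum A f * signChar f 0) - 12 * signChar f 0 -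
      charSum A f * charSum A f * signChar f (∑ a ∈ A, a) -
      4 * (charSum A f * signChar f (∑ a ∈ A, a)) + 12 * signChar f (∑ a ∈ A, a) := by
    rw [AddChar.map_zero_eq_one]
    by_cases hσ : f (∑ a ∈ A, a) = 0
    · have hne : charSum A f ≠ 6 := fun h ↦
        zero_ne_one (hσ.symm.trans (apply_sum_eq_one_of_charSum_eq_six hcard h))
      rw [if_neg hne, signChar_of_eq_zero hσ]
      ring
    · replace hσ := ne_zero_iff_eq_one.mp hσ
      rw [signChar_of_eq_one hσ]
      obtain h | h | h := hA.charSum_eq_of_apply_sum_eq_one hV hcard hσ <;> norm_num [h]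
  have hsum := sum_congr (rfl : univ = univ) fun f _ ↦ hterm f
  have hσA := hA.sum_mem hV hcard
  have hσ0 := hA.sum_ne_zero hV hcard
  simp only [sum_sub_distrib, sum_add_distrib, ← mul_sum, ← sum_filter, sum_const, nsmul_eq_mul,
    sum_charSum_mul_self, sum_charSum_mul_signChar, sum_charSum_mul_charSum_mul_signChar,
    sum_dual_signChar, hA.addConvolution_eq_two hσA hσ0, hA.zero_mem, hσA, hσ0, hV, hcard,
    if_true, if_false] at hsum
  push_cast at hsum
  omega

/-- Modulo eight, `charSum A (f + k)` is determined by the parities of `charSum A k` and of the sum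
over the seven points where `f` equals one. -/
lemma charSum_add_eq_six (hA : IsPointedCompleteCap A) (hV : Nat.card V = 128)
    (hcard : #A = 20) (hf : charSum A f = 6) (hσ : k (∑ a ∈ A, a) = 0)
    (hk : k (∑ a ∈ A with f a = 1, a) = 0) : charSum A (f + k) = 6 := by
  have hseven : #{a ∈ A | f a = 1} = 7 := by
    have := charSum_eq_card_sub A f
    omega
  have hfσ := apply_sum_eq_one_of_charSum_eq_six hcard hf
  have hcases := hA.charSum_eq_of_apply_sum_eq_one (f := f + k) hV hcard
    (by rw [LinearMap.add_apply, hfσ, hσ, add_zero])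
  have hmod := charSum_modEq_of_apply_sum_eq_zero hk
  rw [hseven, Int.modEq_iff_dvd] at hmod
  have hk_sum : charSum A k = 20 ∨ charSum A k = 4 ∨ charSum A k = -4 := by
    obtain rfl | hk0 := eq_or_ne k 0
    · simp [hcard]
    · exact .inr (hA.charSum_eq_of_apply_sum_eq_zero hV hcard hk0 hσ)
  have hadd := charSum_add A f k
  omega

end IsPointedCompleteCap

theorem IsPointedCompleteCap.card_ne_twenty [Finite V] (hA : IsPointedCompleteCap A)
    (hV : Nat.card V = 128) : #A ≠ 20 := by
  intro hcard
  have := Fintype.ofFinite V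
  have := finite_of_finite (ZMod 2) (M := Dual (ZMod 2) V)
  have := Fintype.ofFinite (Dual (ZMod 2) V)
  have height := hA.card_charSum_eq_six hV hcard
  obtain ⟨f, hf⟩ := card_pos.mp
    (by omega : 0 < #{f : Dual (ZMod 2) V | charSum A f = 6})
  rw [mem_filter] at hf
  have hlarge := natCard_le_four_mul_card_dual (∑ a ∈ A, a) (∑ a ∈ A with f a = 1, a)
  have hsmall : #{k : Dual (ZMod 2) V | k (∑ a ∈ A, a) = 0 ∧ k (∑ a ∈ A with f a = 1, a) = 0} ≤
      8 := by
    rw [← height]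
    refine card_le_card_of_injOn (f + ·) (fun k hk ↦ ?_) (add_right_injective f).injOn
    simp only [coe_filter, mem_univ, true_and, Set.mem_ofPred_eq] at hk ⊢
    exact hA.charSum_add_eq_six hV hcard hf.2 hk.1 hk.2
  omega

end CapSpectrum

section SpreadConstruction

lemma sumCovers_biUnion_singleton_product {ι U W : Type*} [Fintype ι] [AddCommGroup U]
    [Module (ZMod 2) U] [AddCommGroup W] [DecidableEq U] [DecidableEq W] {u : ι → U}
    {S : ι → Finset W} (hu : ∀ v ≠ 0, ∃ i j, i ≠ j ∧ u i + u j = v) (hzero : ∀ i, 0 ∈ S i)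
    (hcover : ∀ w, ∃ i, w ∈ S i) (hpair : Pairwise fun i j ↦ SumCovers (S i) (S j)) :
    SumCovers (univ.biUnion fun i ↦ {u i} ×ˢ S i) (univ.biUnion fun i ↦ {u i} ×ˢ S i) := by
  have hmem {i : ι} {s : W} (hs : s ∈ S i) : (u i, s) ∈ univ.biUnion fun i ↦ {u i} ×ˢ S i :=
    mem_biUnion.mpr ⟨i, mem_univ i, mk_mem_product (mem_singleton_self _) hs⟩
  rintro ⟨v, w⟩
  by_cases hv : v = 0
  · obtain ⟨i, hi⟩ := hcover w
    refine ⟨(u i, w), hmem hi, (u i, 0), hmem (hzero i), ?_⟩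
    rw [Prod.mk_add_mk, add_self, add_zero, hv]
  · obtain ⟨i, j, hij, e⟩ := hu v hv
    obtain ⟨s, hs, s', hs', e'⟩ := hpair hij w
    exact ⟨(u i, s), hmem hs, (u j, s'), hmem hs', Prod.ext e e'⟩

/-- Zero and the four points of a frame of the Fano plane. Every nonzero vector of `𝔽₂³` is the sum
of two of these five vectors. -/
def framePoint : Fin 5 → Fin 3 → ZMod 2 :=
  ![![0, 0, 0], ![1, 0, 0], ![0, 1, 0], ![0, 0, 1], ![1, 1, 1]]

/-- The regular spread of `𝔽₂⁴`, formed by the five lines `x = 0`, `y = 0`, `y = x`, `y = ω x` and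
`y = ω² x` of `𝔽₄²`, where `(a, b)` encodes `a + b ω` and `ω² = ω + 1`. -/
def spreadPlane (i : Fin 5) : Finset (Fin 4 → ZMod 2) :=
  univ.image fun p : ZMod 2 × ZMod 2 ↦
    let (a, b) := p
    ![![0, 0, a, b], ![a, b, 0, 0], ![a, b, a, b], ![a, b, b, a + b], ![a, b, a + b, a]] i

lemma pairwise_sumCovers_spreadPlane :
    Pairwise fun i j ↦ SumCovers (spreadPlane i) (spreadPlane j) := by
  simp only [Pairwise, SumCovers]
  decide +kernel

lemma exists_sumCovers_card_eq_twenty {V : Type*} [AddCommGroup V] [Module (ZMod 2) V] [Finite V]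
    (hV : Nat.card V = 128) : ∃ A : Finset V, 0 ∈ A ∧ #A = 20 ∧ SumCovers A A := by
  let A := univ.biUnion fun i ↦ {framePoint i} ×ˢ spreadPlane i
  have hcov : SumCovers A A := sumCovers_biUnion_singleton_product (by decide) (by decide)
    (by decide +kernel) pairwise_sumCovers_spreadPlane
  have hrank : finrank (ZMod 2) ((Fin 3 → ZMod 2) × (Fin 4 → ZMod 2)) = finrank (ZMod 2) V := by
    rw [natCard_eq_two_pow_finrank] at hV
    simpa using (Nat.pow_right_injective le_rfl hV : finrank (ZMod 2) V = 7).symm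
  let e := LinearEquiv.ofFinrankEq _ V hrank
  refine ⟨A.map e.toEquiv.toEmbedding, ?_, ?_, fun v ↦ ?_⟩
  · exact mem_map.mpr ⟨0, by decide +kernel, map_zero e⟩
  · rw [card_map]
    decide +kernel
  · obtain ⟨t, ht, y, hy, h⟩ := hcov (e.symm v)
    exact ⟨e t, mem_map_of_mem _ ht, e y, mem_map_of_mem _ hy, by simp [← map_add, h]⟩

end SpreadConstruction

section Saturating

variable {n : ℕ} {S : Set (Fin n → ZMod 2)} {A : Finset (Fin n → ZMod 2)}

/-- The set `S` together with the zero vector, as a finset. -/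
noncomputable def pointed (S : Set (Fin n → ZMod 2)) : Finset (Fin n → ZMod 2) :=
  insert 0 S.toFinite.toFinset

lemma mem_pointed {x : Fin n → ZMod 2} : x ∈ pointed S ↔ x = 0 ∨ x ∈ S := by
  simp [pointed]

lemma card_pointed (hS : Saturating S) : #(pointed S) = S.ncard + 1 := by
  rw [pointed, card_insert_of_notMem fun h ↦ hS.1 0 (by simpa using h) rfl,
    Set.ncard_eq_toFinset_card]

lemma sumCovers_pointed (hS : Saturating S) : SumCovers (pointed S) (pointed S) := by
  intro v
  simp only [mem_pointed]
  by_cases hv : v = 0 ∨ v ∈ S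
  · exact ⟨v, hv, 0, .inl rfl, add_zero v⟩
  · obtain ⟨a, ha, b, hb, -, rfl⟩ := hS.2 v (mt .inl hv) (mt .inr hv)
    exact ⟨a, .inr ha, b, .inr hb, rfl⟩

lemma isPointedCompleteCap_pointed (hS : Saturating S) (hcap : IsCap S) :
    IsPointedCompleteCap (pointed S) where
  zero_mem := mem_pointed.mpr (.inl rfl)
  sumCovers := sumCovers_pointed hS
  add_notMem a ha b hb ha0 hb0 hab h := by
    have hsum : a + b ∈ S := (mem_pointed.mp h).resolve_left (mt add_eq_zero_iff_eq.mp hab)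
    refine hcap.2 a ((mem_pointed.mp ha).resolve_left ha0) b ((mem_pointed.mp hb).resolve_left hb0)
      (a + b) hsum hab (by simpa using hb0) (by simpa using ha0) (add_self _)

lemma SumCovers.saturating_erase_zero (h : SumCovers A A) :
    Saturating (A.erase 0 : Set (Fin n → ZMod 2)) := by
  refine ⟨fun s hs ↦ ne_of_mem_erase hs, fun x hx hxA ↦ ?_⟩
  obtain ⟨a, ha, b, hb, rfl⟩ := h x
  have hab : a ≠ b := fun e ↦ hx (add_eq_zero_iff_eq.mpr e)
  have ha0 : a ≠ 0 := by
    rintro rfl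
    rw [zero_add] at hx hxA
    exact hxA (mem_erase.mpr ⟨hx, hb⟩)
  have hb0 : b ≠ 0 := by
    rintro rfl
    rw [add_zero] at hx hxA
    exact hxA (mem_erase.mpr ⟨hx, ha⟩)
  exact ⟨a, mem_erase.mpr ⟨ha0, ha⟩, b, mem_erase.mpr ⟨hb0, hb⟩, hab, rfl⟩

end Saturating

end OneSaturating

/-- The smallest size of a minimal 1-saturating set in PG(6,2) is 19: there is a
1-saturating 19-set, every 1-saturating set has at least 19 points, and no
1-saturating 19-set is a cap. -/
theorem saturating_PG6_min_size :
    (∃ S : Set (Fin 7 → ZMod 2), Saturating S ∧ S.ncard = 19) ∧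
    (∀ S : Set (Fin 7 → ZMod 2), Saturating S → 19 ≤ S.ncard) ∧
    (∀ S : Set (Fin 7 → ZMod 2), Saturating S → S.ncard = 19 → ¬ IsCap S) := by
  open OneSaturating in
  have hV : Nat.card (Fin 7 → ZMod 2) = 128 := by simp
  refine ⟨?_, fun S hS ↦ ?_, fun S hS hcard hcap ↦ ?_⟩
  · obtain ⟨A, h0, hA, hcov⟩ := exists_sumCovers_card_eq_twenty hV
    refine ⟨(A.erase 0 : Finset _), hcov.saturating_erase_zero, ?_⟩
    rw [Set.ncard_coe_finset, Finset.card_erase_of_mem h0, hA]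
  · have hle := (sumCovers_pointed hS).twenty_le_card hV
    rwa [card_pointed hS, Nat.succ_le_succ_iff] at hle
  · refine (isPointedCompleteCap_pointed hS hcap).card_ne_twenty hV ?_
    rw [card_pointed hS, hcard]
end
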